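/- arXiv:1807.01878 — 3 statements merged into one kernel-verified Lean document; each statement's English description precedes it below -/
import Mathlib

section
/- Assume in addition that the group (D, ⋆) is commutative and let M : ℝ² → ℝ² be an invertible linear map. Then there exists a unique function g : D → ℝ² with g(y₀) = (0, 0) whose derivative at every y ∈ D equals M ∘ (J₂f(y, y₀))⁻¹ (so that g(y) = ∫_a^b M · (J₂f(γ(s), y₀))⁻¹ · γ′(s) ds for any piecewise C¹ path γ : [a, b] → D from y₀ to y, the integral being independent of the chosen path, and Dg(y₀) = M). Moreover this g is a C^k-diffeomorphism from D onto all of ℝ² and a group isomorphism from (D, ⋆) onto (ℝ², +): g(f(y, z)) = g(y) + g(z) for all y, z ∈ D. -/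
/-!
Write `J y` for the derivative at `y₀` of the translation `f y`. A direct route to `g` would be to
integrate the closed form `M ∘ J⁻¹`. Here `g` is instead obtained as `M` composed with the inverse
of the exponential map of the group, which is constructed from one-parameter subgroups.

* Differentiating associativity gives the invariance `D(f a)(b) ∘ J b = J (f a b)`
  (`fderiv_comp_one`); in particular each `J y` is invertible.
* For a vector `v`, let `γ` be a local solution of `γ' = J(γ) v`, `γ 0 = y₀`. By invariance and
  commutativity, `τ ↦ f (γ τ) (γ (c - τ))` has derivative zero, so
  `f (γ s) (γ t) = γ (s + t)` for small `s`, `t` (`exists_local_curve`). Such a local homomorphism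
  extends to all of `ℝ` by `t ↦ γ (t / n) ^ n` with `n` large (`exists_addMonoidHom_of_local`).
* Multiplying the one-parameter subgroups in the directions `(1, 0)` and `(0, 1)` gives, again by
  commutativity, a homomorphism `φ : ℝ² → D` which is strictly differentiable at `0` with
  derivative the identity (`exists_exp`), hence a local homeomorphism at `0`.
* A homomorphism to a connected group that is a local homeomorphism at `0` is a covering map. If
  the target is simply connected, the identity lifts to a section, and this forces
  injectivity (`isHomeomorph_of_local`). So `φ` is a homeomorphism onto `D`.
* The inverse `s` of `φ` is a homomorphism with derivative the identity at `y₀`; translating,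
  its derivative at `y` is `(J y)⁻¹` (`exists_log`). Then `g = M ∘ s` has derivative `M ∘ J⁻¹`,
  which is `C^(k-1)`, so `g` is `C^k`, and so is its inverse. Uniqueness of `g` holds because `D` is
  connected.
-/
open Filter Topology Set

/-! ### Homomorphisms that are determined near the neutral element -/

/-- A homomorphism from a connected group to a simply connected one that is a local homeomorphism
at `0` is a homeomorphism. It is a covering map, so the identity of `G` lifts to a section `s` with
`s 0 = 0`. The map `v ↦ s (φ v) - v` takes values in the discrete kernel, so it is
constantly `0`. -/
theorem isHomeomorph_of_local {V G : Type*} [AddCommGroup V] [TopologicalSpace V]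
    [IsTopologicalAddGroup V] [ConnectedSpace V]
    [AddCommGroup G] [TopologicalSpace G] [IsTopologicalAddGroup G] [SimplyConnectedSpace G]
    [LocallyPathConnectedSpace G] (φ : V →+ G) (hmap : map φ (𝓝 0) = 𝓝 0)
    (hker : ∀ᶠ v in 𝓝 (0 : V), φ v = 0 → v = 0) : IsHomeomorph φ := by
  have hcont : Continuous φ := continuous_of_continuousAt_zero φ (by
    rw [ContinuousAt, map_zero]; exact hmap.le)
  have hopen : IsOpenMap φ := IsTopologicalAddGroup.isOpenMap_iff_nhds_zero.2 hmap.ge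
  have hrange : IsOpen (φ.range : Set G) := by
    rw [AddMonoidHom.coe_range]; exact hopen.isOpen_range
  have hsurj : Function.Surjective φ := by
    have hclopen : IsClopen (φ.range : Set G) :=
      ⟨φ.range.isClosed_of_isOpen hrange, hrange⟩
    have := hclopen.eq_univ ⟨0, zero_mem _⟩
    rwa [AddMonoidHom.coe_range, range_eq_univ] at this
  have hdisc : IsDiscrete (φ.ker : Set V) := by
    rw [isDiscrete_iff_discreteTopology]
    change DiscreteTopology φ.ker
    refine discreteTopology_of_isOpen_singleton_zero ?_
    rw [isOpen_singleton_iff_nhds_eq_pure]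
    refine le_antisymm ?_ (pure_le_nhds _)
    rw [le_pure_iff, nhds_subtype_eq_comap]
    exact ⟨_, hker, fun x hx => Subtype.ext (hx x.2)⟩
  have hq : IsQuotientMap φ := hopen.isQuotientMap hcont hsurj
  have hcov : IsCoveringMap φ :=
    (hq.isAddQuotientCoveringMap_of_isDiscrete_ker_addMonoidHom hdisc).isCoveringMap
  obtain ⟨s, ⟨hs0, hs⟩, -⟩ := hcov.existsUnique_continuousMap_lifts (ContinuousMap.id G) 0 0
    (by simp)
  have hs' : ∀ x, φ (s x) = x := fun x => congrFun hs x
  have hinj : Function.Injective φ := by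
    have hd : ∀ v, s (φ v) - v ∈ φ.ker := fun v => by
      rw [AddMonoidHom.mem_ker, map_sub, hs', sub_self]
    have hDT : DiscreteTopology φ.ker := isDiscrete_iff_discreteTopology.1 hdisc
    have hc : Continuous fun v => (⟨s (φ v) - v, hd v⟩ : φ.ker) := by fun_prop
    have hconst := fun v => PreconnectedSpace.constant inferInstance hc (x := v) (y := 0)
    refine Function.LeftInverse.injective (g := s) fun v => ?_
    have := congrArg Subtype.val (hconst v)
    simpa [hs0, sub_eq_zero] using this
  exact ⟨hcont, hopen, hinj, hsurj⟩

/-- A local homomorphism `γ` from an interval around `0` in `ℝ` to a commutative group extends to a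
homomorphism on `ℝ`, namely `t ↦ n • γ (t / n)` for any `n` with `|t| / n < ε`. -/
theorem exists_addMonoidHom_of_local {G : Type*} [AddCommGroup G] {ε : ℝ} (hε : 0 < ε)
    (γ : ℝ → G) (hγ : ∀ s t, |s| < ε → |t| < ε → |s + t| < ε → γ (s + t) = γ s + γ t) :
    ∃ Γ : ℝ →+ G, ∀ t, |t| < ε → Γ t = γ t := by
  have h0 : γ 0 = 0 := by
    have := hγ 0 0 (by simpa) (by simpa) (by simpa)
    simpa using this
  have hmul : ∀ (m : ℕ) (s : ℝ), m * |s| < ε → γ (m * s) = m • γ s := by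
    intro m s
    induction m with
    | zero => simp [h0]
    | succ m ih =>
      intro h
      push_cast at h ⊢
      have hs := abs_nonneg s
      have hm : (m : ℝ) * |s| < ε := by nlinarith
      have hm0 : 0 ≤ (m : ℝ) * |s| := by positivity
      have e1 : |(m : ℝ) * s| = m * |s| := by rw [abs_mul, Nat.abs_cast]
      rw [add_mul, one_mul, hγ _ _ (by rwa [e1]) (by nlinarith)
        ((abs_add_le _ _).trans_lt (by rw [e1]; linarith)), ih hm, succ_nsmul]
  -- The value `n • γ (t / n)` is unchanged when `n` is replaced by a multiple.
  have hdiv : ∀ (t : ℝ) (n m : ℕ), 0 < n → 0 < m → |t| < ε * n →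
      n • γ (t / n) = (n * m) • γ (t / (n * m : ℕ)) := by
    intro t n m hn hm h
    have hn' : (0 : ℝ) < n := by exact_mod_cast hn
    have hm' : (0 : ℝ) < m := by exact_mod_cast hm
    have e : t / n = m * (t / (n * m : ℕ)) := by push_cast; field_simp
    have e2 : (m : ℝ) * |t / (n * m : ℕ)| = |t| / n := by
      rw [abs_div, Nat.abs_cast]; push_cast; field_simp
    rw [e, hmul _ _ (by rw [e2, div_lt_iff₀ hn']; exact h), mul_smul]
  have hN : ∀ t : ℝ, ∃ n : ℕ, 0 < n ∧ |t| < ε * n := fun t => by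
    obtain ⟨n, hn⟩ := exists_nat_gt (|t| / ε)
    have h1 : 0 ≤ |t| / ε := by positivity
    refine ⟨n, by exact_mod_cast h1.trans_lt hn, ?_⟩
    rwa [div_lt_iff₀' hε] at hn
  choose N hN0 hN using hN
  have key : ∀ (t : ℝ) (n : ℕ), 0 < n → |t| < ε * n → N t • γ (t / N t) = n • γ (t / n) := by
    intro t n hn h
    rw [hdiv t _ n (hN0 t) hn (hN t), hdiv t n _ hn (hN0 t) h, mul_comm]
  refine ⟨AddMonoidHom.mk' (fun t => N t • γ (t / N t)) fun s t => ?_, fun t ht => ?_⟩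
  · set n := N (|s| + |t|)
    have hn' : (0 : ℝ) < n := by exact_mod_cast hN0 (|s| + |t|)
    have hh := hN (|s| + |t|)
    rw [abs_of_nonneg (by positivity)] at hh
    have hs := abs_nonneg s
    have ht := abs_nonneg t
    have hst := abs_add_le s t
    have a1 : |s| < ε * n := by linarith
    have a2 : |t| < ε * n := by linarith
    have a3 : |s + t| < ε * n := by linarith
    have q : ∀ x : ℝ, |x| < ε * n → |x / n| < ε := fun x hx => by
      rwa [abs_div, Nat.abs_cast, div_lt_iff₀ hn']
    rw [key s n (hN0 _) a1, key t n (hN0 _) a2, key (s + t) n (hN0 _) a3, add_div,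
      hγ _ _ (q s a1) (q t a2) (by rw [← add_div]; exact q _ a3), nsmul_add]
  · change N t • γ (t / N t) = γ t
    rw [key t 1 one_pos (by simpa)]
    simp

/-! ### Commutative Lie groups on open sets -/

/-- The operation `f`, with neutral element `y₀` and inversion `inv`, makes the open set `D` a
commutative group with `C^k` multiplication, `k ≥ 2`. Only continuity of the inversion is recorded,
and the values of `f` and `inv` outside `D` are irrelevant. -/
structure IsCommLieGroupOn {E : Type*} [NormedAddCommGroup E] [NormedSpace ℝ E]
    (k : ℕ) (D : Set E) (f : E → E → E) (y₀ : E) (inv : E → E) : Prop where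
  two_le : 2 ≤ k
  isOpen : IsOpen D
  one_mem : y₀ ∈ D
  mul_mem : ∀ a ∈ D, ∀ b ∈ D, f a b ∈ D
  assoc : ∀ a ∈ D, ∀ b ∈ D, ∀ c ∈ D, f (f a b) c = f a (f b c)
  one_mul : ∀ a ∈ D, f y₀ a = a
  mul_one : ∀ a ∈ D, f a y₀ = a
  inv_mem : ∀ a ∈ D, inv a ∈ D
  mul_inv : ∀ a ∈ D, f a (inv a) = y₀
  inv_mul : ∀ a ∈ D, f (inv a) a = y₀
  smooth : ContDiffOn ℝ k (fun p : E × E => f p.1 p.2) (D ×ˢ D)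
  inv_cont : ContinuousOn inv D
  comm : ∀ a ∈ D, ∀ b ∈ D, f a b = f b a

namespace IsCommLieGroupOn

variable {E : Type*} [NormedAddCommGroup E] [NormedSpace ℝ E] {k : ℕ} {D : Set E}
  {f : E → E → E} {y₀ : E}
  {inv : E → E}

theorem contDiffAt (h : IsCommLieGroupOn k D f y₀ inv) {a b : E} (ha : a ∈ D) (hb : b ∈ D) :
    ContDiffAt ℝ k (Function.uncurry f) (a, b) :=
  h.smooth.contDiffAt ((h.isOpen.prod h.isOpen).mem_nhds ⟨ha, hb⟩)

theorem differentiableAt (h : IsCommLieGroupOn k D f y₀ inv) {a b : E} (ha : a ∈ D)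
    (hb : b ∈ D) : DifferentiableAt ℝ (f a) b := by
  have h1 : DifferentiableAt ℝ (Function.uncurry f) (a, b) :=
    (h.contDiffAt ha hb).differentiableAt (by have := h.two_le; norm_cast; omega)
  exact h1.comp b (f := fun x => (a, x)) (by fun_prop)

theorem contDiffAt_fderiv (h : IsCommLieGroupOn k D f y₀ inv) {y : E} (hy : y ∈ D) :
    ContDiffAt ℝ (k - 1 : ℕ) (fun y => fderiv ℝ (f y) y₀) y := by
  refine ContDiffAt.fderiv (g := fun _ => y₀) (h.contDiffAt hy h.one_mem) contDiffAt_const ?_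
  have := h.two_le
  norm_cast
  omega

theorem fderiv_one (h : IsCommLieGroupOn k D f y₀ inv) :
    fderiv ℝ (f y₀) y₀ = ContinuousLinearMap.id ℝ E := by
  have : f y₀ =ᶠ[𝓝 y₀] id := by
    filter_upwards [h.isOpen.mem_nhds h.one_mem] with z hz using h.one_mul z hz
  rw [this.fderiv_eq, fderiv_id]

theorem fderiv_comp (h : IsCommLieGroupOn k D f y₀ inv) {a b c : E} (ha : a ∈ D) (hb : b ∈ D)
    (hc : c ∈ D) :
    (fderiv ℝ (f a) (f b c)).comp (fderiv ℝ (f b) c) = fderiv ℝ (f (f a b)) c := by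
  have : f (f a b) =ᶠ[𝓝 c] f a ∘ f b := by
    filter_upwards [h.isOpen.mem_nhds hc] with z hz using h.assoc a ha b hb z hz
  rw [this.fderiv_eq, _root_.fderiv_comp _ (h.differentiableAt ha (h.mul_mem b hb c hc))
    (h.differentiableAt hb hc)]

/-- Invariance of the fields `y ↦ J y v`, where `J y = D(f y)(y₀)`, under translations. -/
theorem fderiv_comp_one (h : IsCommLieGroupOn k D f y₀ inv) {a b : E} (ha : a ∈ D)
    (hb : b ∈ D) :
    (fderiv ℝ (f a) b).comp (fderiv ℝ (f b) y₀) = fderiv ℝ (f (f a b)) y₀ := by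
  have := h.fderiv_comp ha hb h.one_mem
  rwa [h.mul_one b hb] at this

/-- The inverse of `D(f y)(y₀)` is the derivative of `f (inv y)` at `y`. -/
theorem isInvertible (h : IsCommLieGroupOn k D f y₀ inv) {y : E} (hy : y ∈ D) :
    (fderiv ℝ (f y) y₀).IsInvertible := by
  have hi := h.inv_mem y hy
  have h1 := h.fderiv_comp_one hi hy
  rw [h.inv_mul y hy, h.fderiv_one] at h1
  have h2 := h.fderiv_comp hy hi hy
  have : f (f y (inv y)) =ᶠ[𝓝 y] id := by
    filter_upwards [h.isOpen.mem_nhds hy] with z hz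
    rw [h.mul_inv y hy]; exact h.one_mul z hz
  rw [h.inv_mul y hy, this.fderiv_eq, fderiv_id] at h2
  exact ⟨ContinuousLinearEquiv.equivOfInverse _ _ (fun x => congrArg (fun L => L x) h1)
    (fun x => congrArg (fun L => L x) h2), rfl⟩

/-- By commutativity, the first partial derivative of the multiplication at `(a, b)` is the
derivative of the translation `f b` at `a`. -/
theorem hasStrictFDerivAt (h : IsCommLieGroupOn k D f y₀ inv) {a b : E} (ha : a ∈ D)
    (hb : b ∈ D) :
    HasStrictFDerivAt (Function.uncurry f)
      ((fderiv ℝ (f b) a).comp (.fst ℝ E E) +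
        (fderiv ℝ (f a) b).comp (.snd ℝ E E)) (a, b) := by
  have h1 : HasStrictFDerivAt (Function.uncurry f) _ (a, b) :=
    (h.contDiffAt ha hb).hasStrictFDerivAt (by have := h.two_le; norm_cast; omega)
  have e1 : fderiv ℝ (f b) a
      = (fderiv ℝ (Function.uncurry f) (a, b)).comp (.inl ℝ E E) := by
    have : f b =ᶠ[𝓝 a] Function.uncurry f ∘ fun x => (x, b) := by
      filter_upwards [h.isOpen.mem_nhds ha] with z hz using h.comm b hb z hz
    rw [this.fderiv_eq]
    exact (h1.hasFDerivAt.comp a (hasFDerivAt_prodMk_left a b)).fderiv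
  have e2 : fderiv ℝ (f a) b
      = (fderiv ℝ (Function.uncurry f) (a, b)).comp (.inr ℝ E E) :=
    (h1.hasFDerivAt.comp b (hasFDerivAt_prodMk_right a b)).fderiv
  refine h1.congr_fderiv ?_
  rw [e1, e2]
  ext1 <;> ext1 <;> simp <;> exact map_zero _

/-- A solution of `γ' = J(γ) v`, `γ 0 = y₀`, is a local one-parameter subgroup. -/
theorem exists_local_curve [CompleteSpace E] (h : IsCommLieGroupOn k D f y₀ inv) (v : E) :
    ∃ ε > 0, ∃ γ : ℝ → E, γ 0 = y₀ ∧ (∀ t, |t| < ε → γ t ∈ D) ∧ HasStrictDerivAt γ v 0 ∧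
      ∀ s t, |s| < ε → |t| < ε → |s + t| < ε → γ (s + t) = f (γ s) (γ t) := by
  have hX : ∀ y ∈ D, ContDiffAt ℝ 1 (fun y => fderiv ℝ (f y) y₀ v) y := fun y hy =>
    ((h.contDiffAt_fderiv hy).clm_apply contDiffAt_const).of_le
      (by have := h.two_le; norm_cast; omega)
  obtain ⟨γ, h0, ε₁, hε₁, hγ⟩ := (hX y₀ h.one_mem)
    |>.exists_forall_mem_closedBall_exists_eq_forall_mem_Ioo_hasDerivAt₀ 0
  have hγ₀ : HasDerivAt γ (fderiv ℝ (f (γ 0)) y₀ v) 0 := hγ 0 (by simp [hε₁])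
  obtain ⟨ε₂, hε₂, hD⟩ := Metric.eventually_nhds_iff.1
    (hγ₀.continuousAt.eventually_mem (h.isOpen.mem_nhds (h0 ▸ h.one_mem)))
  simp only [Real.dist_eq, sub_zero] at hD
  set ε := min ε₁ ε₂
  have hDε : ∀ t, |t| < ε → γ t ∈ D := fun t ht => hD (ht.trans_le (min_le_right _ _))
  have hγε : ∀ t, |t| < ε → HasDerivAt γ (fderiv ℝ (f (γ t)) y₀ v) t := fun t ht =>
    hγ t (by simpa [abs_lt] using ht.trans_le (min_le_left ε₁ ε₂))
  have hε : 0 < ε := lt_min hε₁ hε₂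
  refine ⟨ε, hε, γ, h0, hDε, ?_, ?_⟩
  · have hev : ∀ᶠ t in 𝓝 (0 : ℝ), |t| < ε := by
      filter_upwards [Metric.ball_mem_nhds (0 : ℝ) hε] with t ht
      simpa using ht
    have := hasStrictDerivAt_of_hasDerivAt_of_continuousAt
      (hev.mono hγε) ((ContinuousAt.comp (g := fun y => fderiv ℝ (f y) y₀ v) (x := (0 : ℝ)) (f := γ)
        (hX (γ 0) (h0 ▸ h.one_mem)).continuousAt hγ₀.continuousAt))
    simpa [h0, h.fderiv_one] using this
  · intro s t hs ht hst
    set c := s + t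
    -- The two contributions to the derivative are `± J (f (γ τ) (γ (c - τ))) v`.
    have hF : ∀ τ, |τ| < ε → |c - τ| < ε →
        HasDerivAt (fun τ => f (γ τ) (γ (c - τ))) 0 τ := by
      intro τ h1 h2
      have m1 := hDε _ h1
      have m2 := hDε _ h2
      have d1 := hγε _ h1
      have d2 : HasDerivAt (fun τ => γ (c - τ)) (-fderiv ℝ (f (γ (c - τ))) y₀ v) τ := by
        simpa [Function.comp_def] using (hγε _ h2).scomp τ ((hasDerivAt_id τ).const_sub c)
      have := (h.hasStrictFDerivAt m1 m2).hasFDerivAt.comp_hasDerivAt τ (d1.prodMk d2)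
      refine this.congr_deriv ?_
      have i1 := congrArg (fun L => L v) (h.fderiv_comp_one m1 m2)
      have i2 := congrArg (fun L => L v) (h.fderiv_comp_one m2 m1)
      rw [h.comm _ m2 _ m1] at i2
      simp only [ContinuousLinearMap.comp_apply] at i1 i2
      simp [i1, i2]
    have hconv : Convex ℝ (Ioo (-ε) ε ∩ Ioo (c - ε) (c + ε)) :=
      (convex_Ioo _ _).inter (convex_Ioo _ _)
    have hmem : ∀ τ, τ ∈ Ioo (-ε) ε ∩ Ioo (c - ε) (c + ε) ↔ |τ| < ε ∧ |c - τ| < ε := by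
      intro τ
      simp only [mem_inter_iff, mem_Ioo, abs_lt]
      constructor <;> rintro ⟨⟨_, _⟩, _, _⟩ <;> refine ⟨⟨?_, ?_⟩, ?_, ?_⟩ <;> linarith
    have := hconv.is_const_of_fderivWithin_eq_zero (𝕜 := ℝ) (f := fun τ => f (γ τ) (γ (c - τ)))
      (x := 0) (y := s)
      (fun τ hτ => (hF τ ((hmem τ).1 hτ).1 ((hmem τ).1 hτ).2).differentiableAt.differentiableWithinAt)
      (fun τ hτ => by
        rw [fderivWithin_of_isOpen (isOpen_Ioo.inter isOpen_Ioo) hτ,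
          (hF τ ((hmem τ).1 hτ).1 ((hmem τ).1 hτ).2).hasFDerivAt.fderiv]
        ext1; simp)
      ((hmem 0).2 ⟨by simpa, by simpa⟩) ((hmem s).2 ⟨hs, by simpa [c]⟩)
    simpa [h0, c, h.one_mul _ (hDε _ hst)] using this

/-! ### Exponential map and logarithm -/

/-- The group structure on the subtype `D`, written additively. -/
abbrev addCommGroup (h : IsCommLieGroupOn k D f y₀ inv) : AddCommGroup D :=
  letI : Add D := ⟨fun a b => ⟨f a b, h.mul_mem a a.2 b b.2⟩⟩
  letI : Zero D := ⟨⟨y₀, h.one_mem⟩⟩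
  letI : Neg D := ⟨fun a => ⟨inv a, h.inv_mem a a.2⟩⟩
  { add_assoc := fun a b c => Subtype.ext (h.assoc a a.2 b b.2 c c.2)
    zero_add := fun a => Subtype.ext (h.one_mul a a.2)
    add_zero := fun a => Subtype.ext (h.mul_one a a.2)
    neg_add_cancel := fun a => Subtype.ext (h.inv_mul a a.2)
    add_comm := fun a b => Subtype.ext (h.comm a a.2 b b.2)
    nsmul := nsmulRec
    zsmul := zsmulRec }

theorem isTopologicalAddGroup (h : IsCommLieGroupOn k D f y₀ inv) :
    letI := h.addCommGroup
    IsTopologicalAddGroup D := by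
  let := h.addCommGroup
  refine { continuous_add := ?_, continuous_neg := ?_ }
  · refine Continuous.subtype_mk (f := fun p : D × D => f p.1 p.2) ?_ _
    exact h.smooth.continuousOn.comp_continuous (f := fun p : D × D => ((p.1 : E), (p.2 : E)))
      (by fun_prop) (fun p => ⟨p.1.2, p.2.2⟩)
  · exact Continuous.subtype_mk (f := fun p : D => inv p)
      (h.inv_cont.comp_continuous continuous_subtype_val fun p => p.2) _

/-- The one-parameter subgroup with initial velocity `v`, defined on all of `ℝ`. -/
theorem exists_hom_curve [CompleteSpace E] (h : IsCommLieGroupOn k D f y₀ inv) (v : E) :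
    ∃ Γ : ℝ → E, (∀ t, Γ t ∈ D) ∧ Γ 0 = y₀ ∧ HasStrictDerivAt Γ v 0 ∧
      ∀ s t, Γ (s + t) = f (Γ s) (Γ t) := by
  let := h.addCommGroup
  obtain ⟨ε, hε, γ, h0, hD, hd, hγ⟩ := h.exists_local_curve v
  obtain ⟨Γ, hΓ⟩ := exists_addMonoidHom_of_local hε
    (fun t => if ht : |t| < ε then (⟨γ t, hD t ht⟩ : D) else 0) (by
      intro s t hs ht hst
      simp only [hs, ht, hst, dif_pos]
      exact Subtype.ext (hγ s t hs ht hst))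
  refine ⟨fun t => Γ t, fun t => (Γ t).2, ?_, ?_, fun s t => ?_⟩
  · exact congrArg Subtype.val (map_zero Γ)
  · refine hd.congr_of_eventuallyEq ?_
    filter_upwards [Metric.ball_mem_nhds (0 : ℝ) hε] with t ht
    have ht' : |t| < ε := by simpa using ht
    rw [hΓ t ht', dif_pos ht']
  · exact congrArg Subtype.val (map_add Γ s t)

theorem f_f_comm (h : IsCommLieGroupOn k D f y₀ inv) {a b c d : E} (ha : a ∈ D) (hb : b ∈ D)
    (hc : c ∈ D) (hd : d ∈ D) : f (f a b) (f c d) = f (f a c) (f b d) := by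
  let := h.addCommGroup
  exact congrArg Subtype.val (add_add_add_comm (⟨a, ha⟩ : D) ⟨b, hb⟩ ⟨c, hc⟩ ⟨d, hd⟩)

/-- The exponential map: the product of the one-parameter subgroups in the two coordinate
directions. -/
theorem exists_exp {D : Set (ℝ × ℝ)} {f : ℝ × ℝ → ℝ × ℝ → ℝ × ℝ} {y₀ : ℝ × ℝ}
    {inv : ℝ × ℝ → ℝ × ℝ} (h : IsCommLieGroupOn k D f y₀ inv) :
    ∃ φ : ℝ × ℝ → ℝ × ℝ, (∀ v, φ v ∈ D) ∧ φ 0 = y₀ ∧ (∀ u v, φ (u + v) = f (φ u) (φ v)) ∧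
      HasStrictFDerivAt φ (ContinuousLinearEquiv.refl ℝ (ℝ × ℝ) : (ℝ × ℝ) →L[ℝ] (ℝ × ℝ)) 0 := by
  obtain ⟨Γ₁, h₁, z₁, d₁, a₁⟩ := h.exists_hom_curve (1, 0)
  obtain ⟨Γ₂, h₂, z₂, d₂, a₂⟩ := h.exists_hom_curve (0, 1)
  refine ⟨fun p => f (Γ₁ p.1) (Γ₂ p.2), fun v => h.mul_mem _ (h₁ _) _ (h₂ _), ?_, fun u v => ?_, ?_⟩
  · simp [z₁, z₂, h.one_mul y₀ h.one_mem]
  · simp only [Prod.fst_add, Prod.snd_add, a₁, a₂]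
    exact h.f_f_comm (h₁ _) (h₁ _) (h₂ _) (h₂ _)
  · have e₁ : HasStrictFDerivAt (fun p : ℝ × ℝ => Γ₁ p.1) _ 0 :=
      HasStrictFDerivAt.comp (g := Γ₁) (f := Prod.fst) (0 : ℝ × ℝ) d₁.hasStrictFDerivAt
        hasStrictFDerivAt_fst
    have e₂ : HasStrictFDerivAt (fun p : ℝ × ℝ => Γ₂ p.2) _ 0 :=
      HasStrictFDerivAt.comp (g := Γ₂) (f := Prod.snd) (0 : ℝ × ℝ) d₂.hasStrictFDerivAt
        hasStrictFDerivAt_snd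
    have := (h.hasStrictFDerivAt (h₁ 0) (h₂ 0)).comp (0 : ℝ × ℝ) (e₁.prodMk e₂)
    refine this.congr_fderiv ?_
    rw [z₁, z₂, h.fderiv_one]
    ext <;> simp

/-- For simply connected `D`, an exponential map is a homeomorphism onto `D`. -/
theorem isHomeomorph_exp [CompleteSpace E] [SimplyConnectedSpace D]
    (h : IsCommLieGroupOn k D f y₀ inv) {φ : E → E}
    (hφD : ∀ v, φ v ∈ D) (hφ0 : φ 0 = y₀) (hφ : ∀ u v, φ (u + v) = f (φ u) (φ v))
    (hφ' : HasStrictFDerivAt φ (ContinuousLinearEquiv.refl ℝ E : E →L[ℝ] E) 0) :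
    IsHomeomorph (fun v => (⟨φ v, hφD v⟩ : D)) := by
  let := h.addCommGroup
  have := h.isTopologicalAddGroup
  have : LocallyPathConnectedSpace D := h.isOpen.locallyPathConnectedSpace
  let Φ : E →+ D := AddMonoidHom.mk' (fun v => (⟨φ v, hφD v⟩ : D)) fun u v =>
    Subtype.ext (hφ u v)
  refine isHomeomorph_of_local Φ ?_ ?_
  · refine Filter.map_injective Subtype.val_injective ?_
    have h0 : ((0 : D) : E) = y₀ := rfl
    rw [map_nhds_subtype_val, h.isOpen.nhdsWithin_eq (0 : D).2, Filter.map_map, h0, ← hφ0]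
    exact hφ'.map_nhds_eq_of_equiv
  · filter_upwards [hφ'.eventually_left_inverse] with v hv hv0
    have hv1 : φ v = φ 0 := (congrArg Subtype.val hv0).trans hφ0.symm
    rw [← hv, hv1, hφ'.localInverse_apply_image]

/-- The logarithm `s`, inverse to the exponential map `φ`, is a homomorphism with derivative
`(J y)⁻¹` at `y`. -/
theorem exists_log [CompleteSpace E] [SimplyConnectedSpace D]
    (h : IsCommLieGroupOn k D f y₀ inv) {φ : E → E}
    (hφD : ∀ v, φ v ∈ D) (hφ0 : φ 0 = y₀) (hφ : ∀ u v, φ (u + v) = f (φ u) (φ v))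
    (hφ' : HasStrictFDerivAt φ (ContinuousLinearEquiv.refl ℝ E : E →L[ℝ] E) 0) :
    Continuous φ ∧ ∃ s : E → E, (∀ v, s (φ v) = v) ∧ (∀ y ∈ D, φ (s y) = y) ∧
      (∀ y ∈ D, ∀ z ∈ D, s (f y z) = s y + s z) ∧
      (∀ y ∈ D, HasFDerivAt s (fderiv ℝ (f y) y₀).inverse y) := by
  have hH := h.isHomeomorph_exp hφD hφ0 hφ hφ'
  refine ⟨continuous_subtype_val.comp hH.continuous, ?_⟩
  obtain ⟨s, hs⟩ : ∃ s : E → E, ∀ y : D, s y = hH.homeomorph.symm y :=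
    ⟨fun y => open Classical in if hy : y ∈ D then hH.homeomorph.symm ⟨y, hy⟩ else 0,
      fun y => by simp⟩
  have hsφ : ∀ v, s (φ v) = v := fun v => by
    rw [hs ⟨φ v, hφD v⟩]
    exact hH.homeomorph.symm_apply_apply v
  have hφs : ∀ y ∈ D, φ (s y) = y := fun y hy => by
    rw [hs ⟨y, hy⟩]
    exact congrArg Subtype.val (hH.homeomorph.apply_symm_apply ⟨y, hy⟩)
  have hadd : ∀ y ∈ D, ∀ z ∈ D, s (f y z) = s y + s z := fun y hy z hz => by
    conv_lhs => rw [← hφs y hy, ← hφs z hz, ← hφ, hsφ]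
  refine ⟨s, hsφ, hφs, hadd, fun y hy => ?_⟩
  have hscont : ContinuousOn s D := by
    rw [continuousOn_iff_continuous_domRestrict]
    exact hH.homeomorph.symm.continuous.congr fun y => (hs y).symm
  have hs0 : s y₀ = 0 := by rw [← hφ0, hsφ]
  have hd0 : HasFDerivAt s (ContinuousLinearMap.id ℝ E) y₀ := by
    refine HasFDerivAt.of_local_left_inverse (f := φ) (f' := ContinuousLinearEquiv.refl ℝ E)
      (hscont.continuousAt (h.isOpen.mem_nhds h.one_mem)) (by rw [hs0]; exact hφ'.hasFDerivAt) ?_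
    filter_upwards [h.isOpen.mem_nhds h.one_mem] with z hz using hφs z hz
  have hi := h.inv_mem y hy
  have h1 := h.fderiv_comp_one hi hy
  rw [h.inv_mul y hy, h.fderiv_one] at h1
  -- Translation by `inv y` carries the derivative at `y₀` over to `y`, as
  -- `s z = s y + s (f (inv y) z)`.
  have hd1 : HasFDerivAt (fun z => s y + s (f (inv y) z)) (fderiv ℝ (f (inv y)) y) y := by
    refine HasFDerivAt.const_add _ ?_
    exact HasFDerivAt.comp y (g := s) (f := f (inv y)) (by rw [h.inv_mul y hy]; exact hd0)
      (h.differentiableAt hi hy).hasFDerivAt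
  have e : (fderiv ℝ (f y) y₀).inverse = fderiv ℝ (f (inv y)) y := by
    obtain ⟨A, hA⟩ := h.isInvertible hy
    rw [← hA] at h1 ⊢
    rw [ContinuousLinearMap.inverse_equiv]
    ext x
    simpa using (congrArg (fun L => L (A.symm x)) h1).symm
  rw [e]
  refine hd1.congr_of_eventuallyEq ?_
  filter_upwards [h.isOpen.mem_nhds hy] with z hz
  rw [← hadd y hy _ (h.mul_mem _ hi _ hz), ← h.assoc y hy _ hi z hz, h.mul_inv y hy, h.one_mul z hz]

end IsCommLieGroupOn


/-- for a commutative `C^k` Lie group structure `(D, ⋆)` (with `k ≥ 2`) on an open,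
connected, simply connected set `D ⊆ ℝ²`, and any invertible linear map `M : ℝ² → ℝ²`, there is a
unique map `g : D → ℝ²` with `g(y₀) = 0` and derivative `M ∘ (J₂f(y, y₀))⁻¹` at every `y ∈ D`;
moreover `Dg(y₀) = M` and `g` is a `C^k`-diffeomorphism from `D` onto `ℝ²` and a group isomorphism
onto `(ℝ², +)`. -/
theorem stmt_2
    (k : ℕ) (hk : 2 ≤ k)
    (D : Set (ℝ × ℝ)) (hDopen : IsOpen D) (hDconn : IsConnected D)
    (hDsc : SimplyConnectedSpace D)
    (f : ℝ × ℝ → ℝ × ℝ → ℝ × ℝ) (y₀ : ℝ × ℝ) (hy₀ : y₀ ∈ D)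
    (hmul : ∀ a ∈ D, ∀ b ∈ D, f a b ∈ D)
    (hassoc : ∀ a ∈ D, ∀ b ∈ D, ∀ c ∈ D, f (f a b) c = f a (f b c))
    (hone_mul : ∀ a ∈ D, f y₀ a = a)
    (hmul_one : ∀ a ∈ D, f a y₀ = a)
    (inv : ℝ × ℝ → ℝ × ℝ)
    (hinv_mem : ∀ a ∈ D, inv a ∈ D)
    (hmul_inv : ∀ a ∈ D, f a (inv a) = y₀)
    (hinv_mul : ∀ a ∈ D, f (inv a) a = y₀)
    (hf_smooth : ContDiffOn ℝ k (fun p : (ℝ × ℝ) × (ℝ × ℝ) => f p.1 p.2) (D ×ˢ D))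
    (hinv_smooth : ContDiffOn ℝ k inv D)
    (hcomm : ∀ a ∈ D, ∀ b ∈ D, f a b = f b a)
    (M : (ℝ × ℝ) →L[ℝ] (ℝ × ℝ)) (hM : Function.Bijective M) :
    ∃ g : ℝ × ℝ → ℝ × ℝ,
      g y₀ = 0 ∧
      (∀ y ∈ D, HasFDerivAt g (M.comp (fderiv ℝ (fun x => f y x) y₀).inverse) y) ∧
      (∀ g' : ℝ × ℝ → ℝ × ℝ, g' y₀ = 0 →
        (∀ y ∈ D, HasFDerivAt g' (M.comp (fderiv ℝ (fun x => f y x) y₀).inverse) y) →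
        Set.EqOn g' g D) ∧
      fderiv ℝ g y₀ = M ∧
      ContDiffOn ℝ k g D ∧
      Set.BijOn g D Set.univ ∧
      (∃ ginv : ℝ × ℝ → ℝ × ℝ, ContDiff ℝ k ginv ∧ (∀ x : ℝ × ℝ, ginv x ∈ D) ∧
        (∀ y ∈ D, ginv (g y) = y) ∧ (∀ x : ℝ × ℝ, g (ginv x) = x)) ∧
      (∀ y ∈ D, ∀ z ∈ D, g (f y z) = g y + g z) := by
  have h : IsCommLieGroupOn k D f y₀ inv := ⟨hk, hDopen, hy₀, hmul, hassoc, hone_mul, hmul_one,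
    hinv_mem, hmul_inv, hinv_mul, hf_smooth, hinv_smooth.continuousOn, hcomm⟩
  obtain ⟨φ, hφD, hφ0, hφ, hφ'⟩ := h.exists_exp
  obtain ⟨hφc, s, hsφ, hφs, hadd, hs'⟩ := h.exists_log hφD hφ0 hφ hφ'
  obtain ⟨N, hN⟩ : ∃ N : (ℝ × ℝ) ≃L[ℝ] (ℝ × ℝ), (N : (ℝ × ℝ) →L[ℝ] (ℝ × ℝ)) = M :=
    ⟨(LinearEquiv.ofBijective M.toLinearMap hM).toContinuousLinearEquiv, by ext <;> rfl⟩
  have hN' : ∀ x, M x = N x := fun x => by rw [← hN]; rfl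
  have hs0 : s y₀ = 0 := by rw [← hφ0, hsφ]
  have hg0 : M (s y₀) = 0 := by rw [hs0, map_zero]
  have hg : ∀ y ∈ D, HasFDerivAt (fun y => M (s y))
      (M.comp (fderiv ℝ (fun x => f y x) y₀).inverse) y := fun y hy =>
    M.hasFDerivAt.comp y (hs' y hy)
  have hφN : ∀ x, M (s (φ (N.symm x))) = x := fun x => by rw [hsφ, hN', N.apply_symm_apply]
  have hNφ : ∀ y ∈ D, φ (N.symm (M (s y))) = y := fun y hy => by
    rw [hN', N.symm_apply_apply, hφs y hy]
  -- `Dg = M ∘ J⁻¹` is `C^(k-1)`, so `g` gains one order of differentiability.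
  have hgk : ContDiffOn ℝ k (fun y => M (s y)) D := by
    obtain ⟨m, rfl⟩ : ∃ m, k = m + 1 := ⟨k - 1, by omega⟩
    push_cast
    rw [contDiffOn_succ_iff_fderiv_of_isOpen hDopen]
    refine ⟨fun y hy => (hg y hy).differentiableAt.differentiableWithinAt, by simp, ?_⟩
    have hD' : ContDiffOn ℝ m (fun y => M.comp (fderiv ℝ (f y) y₀).inverse) D := fun y hy => by
      have h1 : ContDiffAt ℝ m (fun y => fderiv ℝ (f y) y₀) y := h.contDiffAt_fderiv hy
      obtain ⟨A, hA⟩ := h.isInvertible hy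
      have h2 : ContDiffAt ℝ m ContinuousLinearMap.inverse (fderiv ℝ (f y) y₀) := by
        rw [← hA]; exact contDiffAt_map_inverse A
      have h3 : ContDiffAt ℝ m (fun y => (fderiv ℝ (f y) y₀).inverse) y :=
        ContDiffAt.comp (g := ContinuousLinearMap.inverse) (f := fun y => fderiv ℝ (f y) y₀) y h2 h1
      have h4 : ContDiffAt ℝ m (fun _ : ℝ × ℝ => M) y := contDiffAt_const
      exact (h4.clm_comp h3).contDiffWithinAt
    exact hD'.congr fun y hy => (hg y hy).fderiv
  refine ⟨fun y => M (s y), hg0, hg, fun g' hg'0 hg' => ?_, ?_, hgk, ⟨fun _ _ => mem_univ _, ?_, ?_⟩,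
    ⟨fun x => φ (N.symm x), ?_, fun x => hφD _, hNφ, hφN⟩, ?_⟩
  · exact hDopen.eqOn_of_fderiv_eq hDconn.isPreconnected
      (fun y hy => (hg' y hy).differentiableAt.differentiableWithinAt)
      (fun y hy => (hg y hy).differentiableAt.differentiableWithinAt)
      (fun y hy => (hg' y hy).fderiv.trans (hg y hy).fderiv.symm) hy₀ (hg'0.trans hg0.symm)
  · rw [(hg y₀ hy₀).fderiv]
    change M.comp (fderiv ℝ (f y₀) y₀).inverse = M
    rw [h.fderiv_one, ContinuousLinearMap.inverse_id, ContinuousLinearMap.comp_id]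
  · exact LeftInvOn.injOn (f₁' := fun x => φ (N.symm x)) hNφ
  · exact fun x _ => ⟨φ (N.symm x), hφD _, hφN x⟩
  · let e : OpenPartialHomeomorph (ℝ × ℝ) (ℝ × ℝ) :=
      { toFun := fun y => M (s y)
        invFun := fun x => φ (N.symm x)
        source := D
        target := univ
        map_source' := fun _ _ => mem_univ _
        map_target' := fun x _ => hφD _
        left_inv' := hNφ
        right_inv' := fun x _ => hφN x
        open_source := hDopen
        open_target := isOpen_univ
        continuousOn_toFun := hgk.continuousOn
        continuousOn_invFun := (hφc.comp N.symm.continuous).continuousOn }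
    refine contDiff_iff_contDiffAt.2 fun x => ?_
    obtain ⟨A, hA⟩ := h.isInvertible (hφD (N.symm x))
    refine e.contDiffAt_symm (f₀' := A.symm.trans N) (mem_univ x) ?_
      (hgk.contDiffAt (hDopen.mem_nhds (hφD _)))
    refine (hg _ (hφD (N.symm x))).congr_fderiv ?_
    change M.comp (fderiv ℝ (f (φ (N.symm x))) y₀).inverse = _
    rw [← hA, ContinuousLinearMap.inverse_equiv, ← hN]
    rfl
  · intro y hy z hz
    simp only [hadd y hy z hz, map_add]
end

section
/- Assume in addition that the group (D, ⋆) is non-commutative; then Y₀ ≠ (0, 0), and let M be the linear map of ℝ² whose matrix in the canonical basis is ((π₂(Y₀), −π₁(Y₀)), (π₁(Y₀), π₂(Y₀))), where π₁, π₂ are the coordinate projections. Then there exists a unique pair of functions g₁, g₂ : D → ℝ with g₁(y₀) = g₂(y₀) = 0 such that for every y ∈ D the differential of g₁ at y is the linear form a ↦ π₁(M · (J₂f(y, y₀))⁻¹ · a) and the differential of g₂ at y is the linear form a ↦ e^{g₁(y)} π₂(M · (J₂f(y, y₀))⁻¹ · a). Moreover g := (g₁, g₂) is a C^k-diffeomorphism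 from D onto all of ℝ² and a group isomorphism from (D, ⋆) onto (ℝ², T): for all y, z ∈ D, g₁(f(y, z)) = g₁(y) + g₁(z) and g₂(f(y, z)) = g₂(y) + e^{g₁(y)} g₂(z). -/
/-!
Write `θ(y) = (J₂f(y, y₀))⁻¹` for the left-invariant Maurer–Cartan form on `D`. Differentiating the
associativity law gives `dθ = -(θ₁ ∧ θ₂) Y₀` (`IsPlaneLieGroup.structure_eq`).

If `Y₀ = 0`, then `θ` is closed and, `D` being simply connected, has a primitive. By left invariance
this primitive is a homomorphism to `(ℝ², +)`, and it is locally injective, so its kernel is discrete;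
commutators lie in the kernel and depend continuously on their entries, so they are trivial on the
connected group `D` (`IsPlaneLieGroup.comm_of_bracketVec_eq_zero`).

If `Y₀ ≠ 0`, put `ω = M ∘ θ`. Since `M Y₀ = (0, |Y₀|²)` and `det M = |Y₀|²`, the structure equation
becomes `dω₁ = 0` and `dω₂ = -ω₁ ∧ ω₂`. Hence `ω₁` has a primitive `g₁`, and then `e^{g₁} ω₂` is
closed and has a primitive `g₂` (`IsPlaneLieGroup.exists_isAffineChart`). The two primitives are
unique on the connected set `D`; comparing them with their left translates gives the homomorphism
law for `T`. The map `g = (g₁, g₂)` is a local diffeomorphism and a homomorphism from a connected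
group to the simply connected group `(ℝ², T)`, so it is a covering map of a simply connected space
and therefore a bijection (`IsAffineChart.bijOn`); its inverse is `C^k` by the inverse function
theorem.
-/

section

open Set Filter Topology

/-! ### Covering space arguments -/

/-- The type `F` with the discrete topology, used as the fibre of a covering space. -/
def DiscreteCopy (F : Type*) : Type _ := F

instance (F : Type*) : TopologicalSpace (DiscreteCopy F) := ⊥
instance (F : Type*) : DiscreteTopology (DiscreteCopy F) := ⟨rfl⟩

/-- Poincaré lemma: a differentiable closed one-form on a simply connected open set has a primitive.
The germs of local primitives form a covering space of `D`: on the ball around `i` they are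
`h i + const`, so the covering is trivialized there by the constant, with transition functions the
translations by the locally constant functions `h i - h j`. A section of this covering, obtained by
lifting the identity of `D`, is a global primitive. -/
theorem exists_primitive {E F : Type*} [NormedAddCommGroup E] [NormedSpace ℝ E]
    [NormedAddCommGroup F] [NormedSpace ℝ F] [CompleteSpace F]
    {D : Set E} (hD : IsOpen D) (hsc : SimplyConnectedSpace D)
    {ω : E → E →L[ℝ] F} (hω : DifferentiableOn ℝ ω D)
    (hdω : ∀ y ∈ D, ∀ a b, fderiv ℝ ω y a b = fderiv ℝ ω y b a)
    {y₀ : E} (hy₀ : y₀ ∈ D) :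
    ∃ g : E → F, g y₀ = 0 ∧ ∀ y ∈ D, HasFDerivAt g (ω y) y := by
  classical
  have hloc : ∀ x : D, ∃ r > 0, Metric.ball (x : E) r ⊆ D ∧
      ∃ h : E → F, ∀ y ∈ Metric.ball (x : E) r, HasFDerivAt h (ω y) y := by
    intro x
    obtain ⟨r, hr, hrD⟩ := Metric.isOpen_iff.1 hD x x.2
    refine ⟨r, hr, hrD, ?_⟩
    exact (convex_ball _ _).exists_forall_hasFDerivAt_of_fderiv_symmetric Metric.isOpen_ball
      (hω.mono hrD) fun a ha => hdω a (hrD ha)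
  choose r hr hrD h hh using hloc
  -- two local primitives differ by a locally constant function
  have hconst : ∀ i j : D, ∀ b ∈ Metric.ball (i : E) (r i) ∩ Metric.ball (j : E) (r j),
      ∀ᶠ y in 𝓝 b, h i y - h j y = h i b - h j b := by
    intro i j b hb
    have hU : Metric.ball (i : E) (r i) ∩ Metric.ball (j : E) (r j) ∈ 𝓝 b :=
      (Metric.isOpen_ball.inter Metric.isOpen_ball).mem_nhds hb
    filter_upwards [hU] with y hy
    have hd : ∀ z ∈ Metric.ball (i : E) (r i) ∩ Metric.ball (j : E) (r j),
        HasFDerivWithinAt (fun y => h i y - h j y) (0 : E →L[ℝ] F)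
          (Metric.ball (i : E) (r i) ∩ Metric.ball (j : E) (r j)) z := fun z hz => by
      have := ((hh i z hz.1).sub (hh j z hz.2)).hasFDerivWithinAt
        (s := Metric.ball (i : E) (r i) ∩ Metric.ball (j : E) (r j))
      rwa [sub_self] at this
    have := ((convex_ball _ _).inter (convex_ball _ _)).norm_image_sub_le_of_norm_hasFDerivWithin_le
      (C := 0) hd (fun z _ => by simp) hb hy
    rw [← sub_eq_zero, ← norm_le_zero_iff]
    simpa using this
  -- the covering space of germs of primitives; the fibre coordinate is the constant
  let Z : FiberBundleCore D D (DiscreteCopy F) :=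
    { baseSet := fun i => Subtype.val ⁻¹' Metric.ball (i : E) (r i)
      isOpen_baseSet := fun i => Metric.isOpen_ball.preimage continuous_subtype_val
      indexAt := id
      mem_baseSet_at := fun x => Metric.mem_ball_self (hr x)
      coordChange := fun i j b v => ((show F from v) + (h i b - h j b) : F)
      coordChange_self := fun i x _ v => by
        show (show F from v) + (h i x - h i x) = (show F from v)
        rw [sub_self, add_zero]
      continuousOn_coordChange := by
        rintro i j ⟨b, v⟩ ⟨hb, -⟩
        refine ContinuousAt.continuousWithinAt ?_
        have h1 : ∀ᶠ p : D × DiscreteCopy F in 𝓝 (b, v),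
            h i p.1 - h j p.1 = h i b - h j b :=
          (show ContinuousAt (fun p : D × DiscreteCopy F => (p.1 : E)) (b, v) by
            fun_prop).eventually (hconst i j b hb)
        have h2 : ∀ᶠ p : D × DiscreteCopy F in 𝓝 (b, v), p.2 = v :=
          (show ContinuousAt (fun p : D × DiscreteCopy F => p.2) (b, v) by fun_prop).eventually
            (show ∀ᶠ w in 𝓝 v, w = v by rw [nhds_discrete]; rfl)
        refine ContinuousAt.congr (f := fun _ : D × DiscreteCopy F =>
          (show DiscreteCopy F from ((show F from v) + (h i b - h j b) : F))) continuousAt_const ?_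
        filter_upwards [h1, h2] with p hp1 hp2
        rw [hp1, hp2]
      coordChange_comp := fun i j k x _ v => by
        show ((show F from v) + (h i x - h j x)) + (h j x - h k x) = (show F from v) + (h i x - h k x)
        abel }
  have hcov : IsCoveringMap (Bundle.TotalSpace.proj : Z.TotalSpace → D) :=
    FiberBundle.isCoveringMap
  have : LocallyPathConnectedSpace D := hD.locallyPathConnectedSpace
  obtain ⟨s, ⟨-, hs⟩, -⟩ := hcov.existsUnique_continuousMap_lifts (ContinuousMap.id D)
    ⟨y₀, hy₀⟩ (⟨⟨y₀, hy₀⟩, (0 : F)⟩ : Z.TotalSpace) rfl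
  have hs' : ∀ b, (s b).proj = b := fun b => congrFun hs b
  -- the value at `b` of the primitive encoded by a point of the fibre over `b`
  let G : D → F := fun b => (show F from (s b).snd) + h (s b).proj b
  have key : ∀ b₀ : D, ∀ᶠ b : D in 𝓝 b₀, G b - h b₀ b = G b₀ - h b₀ b₀ := by
    intro b₀
    have hmem : s b₀ ∈ (Z.localTriv b₀).source := by
      rw [Z.mem_localTriv_source, hs']
      exact Z.mem_baseSet_at b₀
    have hc : ContinuousAt (fun b => (Z.localTriv b₀ (s b)).2) b₀ :=
      continuous_snd.continuousAt.comp
        (((Z.localTriv b₀).continuousOn_toFun.continuousAt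
          ((Z.localTriv b₀).open_source.mem_nhds hmem)).comp s.continuous.continuousAt)
    have hev : ∀ᶠ b in 𝓝 b₀, (Z.localTriv b₀ (s b)).2 = (Z.localTriv b₀ (s b₀)).2 := by
      have := hc.eventually
        (show ∀ᶠ w in 𝓝 ((Z.localTriv b₀ (s b₀)).2), w = (Z.localTriv b₀ (s b₀)).2 by
          rw [nhds_discrete]; rfl)
      exact this
    have hval : ∀ b, (Z.localTriv b₀ (s b)).2 = (G b - h b₀ b : F) := by
      intro b
      show (show F from (s b).snd) + (h (s b).proj (s b).proj - h b₀ (s b).proj)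
        = (show F from (s b).snd) + h (s b).proj b - h b₀ b
      rw [hs']
      abel
    filter_upwards [hev] with b hb
    rw [hval, hval] at hb
    exact hb
  refine ⟨fun y => if hy : y ∈ D then G ⟨y, hy⟩ - G ⟨y₀, hy₀⟩ else 0, by simp [hy₀], ?_⟩
  intro y hy
  have h1 : HasFDerivAt (fun x => h ⟨y, hy⟩ x + (G ⟨y, hy⟩ - h ⟨y, hy⟩ y - G ⟨y₀, hy₀⟩)) (ω y) y :=
    (hh ⟨y, hy⟩ y (Metric.mem_ball_self (hr _))).add_const _
  refine h1.congr_of_eventuallyEq ?_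
  have h2 := key ⟨y, hy⟩
  rw [nhds_subtype_eq_comap, eventually_comap] at h2
  filter_upwards [h2, hD.mem_nhds hy] with x hx hxD
  have := hx ⟨x, hxD⟩ rfl
  simp only [hxD, dif_pos]
  rw [sub_eq_iff_eq_add.1 this]
  abel

/-- A locally injective open homomorphism from a connected group to a simply connected group is
bijective: its image is an open, hence closed, subgroup and its kernel is discrete, so it is a
covering map, which is injective because the identity of the base lifts to a section. -/
theorem MonoidHom.bijective_of_simplyConnected {G H : Type*} [Group G] [TopologicalSpace G]
    [IsTopologicalGroup G] [ConnectedSpace G] [Group H] [TopologicalSpace H] [ContinuousMul H]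
    [SimplyConnectedSpace H] [LocallyPathConnectedSpace H] (φ : G →* H) (hc : Continuous φ)
    (ho : IsOpenMap φ) (hinj : ∀ x : G, ∃ U ∈ 𝓝 x, InjOn φ U) : Function.Bijective φ := by
  have hsurj : Function.Surjective φ := by
    have hop : IsOpen (φ.range : Set H) := by
      simpa using ho.isOpen_range
    have hcl : IsClosed (φ.range : Set H) := φ.range.isClosed_of_isOpen hop
    have huniv : (φ.range : Set H) = univ := IsClopen.eq_univ ⟨hcl, hop⟩ ⟨1, φ.range.one_mem⟩
    exact range_eq_univ.1 (by simpa using huniv)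
  have hdisc : IsDiscrete (φ.ker : Set G) := by
    refine .of_nhdsWithin fun x hx => ?_
    obtain ⟨U, hU, hUinj⟩ := hinj x
    rw [le_pure_iff]
    filter_upwards [mem_nhdsWithin_of_mem_nhds hU, self_mem_nhdsWithin] with y hyU hy
    exact hUinj hyU (mem_of_mem_nhds hU) ((MonoidHom.mem_ker.1 hy).trans (MonoidHom.mem_ker.1 hx).symm)
  have hcov : IsCoveringMap φ :=
    ((IsOpenQuotientMap.mk hsurj hc ho).isQuotientMap
      |>.isQuotientCoveringMap_of_isDiscrete_ker_monoidHom hdisc).isCoveringMap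
  obtain ⟨s, ⟨hs1, hs⟩, -⟩ := hcov.existsUnique_continuousMap_lifts (ContinuousMap.id H)
    1 1 (map_one φ)
  -- `s ∘ φ` and the identity are two lifts of `φ` which agree at `1`
  have hsφ : ⇑s ∘ ⇑φ = (fun x => x) := by
    refine hcov.eq_of_comp_eq (s.continuous.comp hc) continuous_id ?_ (1 : G) (by simp [hs1])
    rw [← Function.comp_assoc, hs]; rfl
  refine ⟨fun a b hab => ?_, hsurj⟩
  have ha := congrFun hsφ a
  have hb := congrFun hsφ b
  simp only [Function.comp_apply] at ha hb
  rw [← ha, hab, hb]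

/-- A connected group with a locally injective homomorphism to a commutative group is commutative:
the commutator takes values in the kernel, which is discrete, so it is locally constant. -/
theorem MonoidHom.commute_of_locallyInjective {G A : Type*} [Group G] [TopologicalSpace G]
    [IsTopologicalGroup G] [ConnectedSpace G] [CommGroup A] (φ : G →* A)
    (hinj : ∀ x : G, ∃ U ∈ 𝓝 x, InjOn φ U) (a b : G) : a * b = b * a := by
  have hloc : IsLocallyConstant (fun p : G × G => p.1 * p.2 * p.1⁻¹ * p.2⁻¹) := by
    rw [IsLocallyConstant.iff_eventually_eq]
    intro p
    obtain ⟨U, hU, hUinj⟩ := hinj (p.1 * p.2 * p.1⁻¹ * p.2⁻¹)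
    have hcont : ContinuousAt (fun p : G × G => p.1 * p.2 * p.1⁻¹ * p.2⁻¹) p := by fun_prop
    filter_upwards [hcont hU] with q hq
    refine hUinj hq (mem_of_mem_nhds hU) ?_
    simp [mul_assoc]
  have h := hloc.apply_eq_of_preconnectedSpace (a, b) (1, 1)
  simp only [mul_one, inv_one] at h
  rw [mul_inv_eq_one] at h
  rwa [mul_inv_eq_iff_eq_mul] at h

/-! ### The Maurer–Cartan form of a plane group -/

/-- The operation `y ⋆ x = f y x` makes the connected open set `D ⊆ ℝ²` a group with neutral element
`y₀` and inversion `inv`, both operations being of class `C^k` on `D`, with `k ≥ 2`. Nothing is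
required of `f` and `inv` outside `D`. -/
structure IsPlaneLieGroup (k : ℕ) (D : Set (ℝ × ℝ)) (f : ℝ × ℝ → ℝ × ℝ → ℝ × ℝ) (y₀ : ℝ × ℝ)
    (inv : ℝ × ℝ → ℝ × ℝ) : Prop where
  two_le : 2 ≤ k
  isOpen : IsOpen D
  isConnected : IsConnected D
  one_mem : y₀ ∈ D
  mul_mem : ∀ a ∈ D, ∀ b ∈ D, f a b ∈ D
  assoc : ∀ a ∈ D, ∀ b ∈ D, ∀ c ∈ D, f (f a b) c = f a (f b c)
  one_mul : ∀ a ∈ D, f y₀ a = a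
  mul_one : ∀ a ∈ D, f a y₀ = a
  inv_mem : ∀ a ∈ D, inv a ∈ D
  mul_inv : ∀ a ∈ D, f a (inv a) = y₀
  inv_mul : ∀ a ∈ D, f (inv a) a = y₀
  smooth : ContDiffOn ℝ k (fun p : (ℝ × ℝ) × (ℝ × ℝ) => f p.1 p.2) (D ×ˢ D)
  smooth_inv : ContDiffOn ℝ k inv D

/-- The left-invariant Maurer–Cartan form `θ(y) = (J₂f(y, y₀))⁻¹`. For `y ∈ D` the linear map
`J₂f(y, y₀)` is invertible, so `inverse` does not take its junk value `0` there. -/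
noncomputable def maurerCartan (f : ℝ × ℝ → ℝ × ℝ → ℝ × ℝ) (y₀ : ℝ × ℝ) (y : ℝ × ℝ) :
    ℝ × ℝ →L[ℝ] ℝ × ℝ :=
  (fderiv ℝ (fun x => f y x) y₀).inverse

/-- The vector `Y₀ = [V(e₁), V(e₂)](y₀)`, where `V(u)(y) = J₂f(y, y₀) u` are the left-invariant
vector fields; it is the structure constant of the two-dimensional Lie algebra. -/
noncomputable def bracketVec (f : ℝ × ℝ → ℝ × ℝ → ℝ × ℝ) (y₀ : ℝ × ℝ) : ℝ × ℝ :=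
  fderiv ℝ (fun y => fderiv ℝ (fun x => f y x) y₀ ((0 : ℝ), (1 : ℝ))) y₀
      (fderiv ℝ (fun x => f y₀ x) y₀ ((1 : ℝ), (0 : ℝ)))
    - fderiv ℝ (fun y => fderiv ℝ (fun x => f y x) y₀ ((1 : ℝ), (0 : ℝ))) y₀
      (fderiv ℝ (fun x => f y₀ x) y₀ ((0 : ℝ), (1 : ℝ)))

namespace IsPlaneLieGroup

variable {k : ℕ} {D : Set (ℝ × ℝ)} {f : ℝ × ℝ → ℝ × ℝ → ℝ × ℝ} {y₀ : ℝ × ℝ}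
  {inv : ℝ × ℝ → ℝ × ℝ}

theorem contDiffAt_mul (h : IsPlaneLieGroup k D f y₀ inv) {y z : ℝ × ℝ} (hy : y ∈ D) (hz : z ∈ D) :
    ContDiffAt ℝ k (fun p : (ℝ × ℝ) × (ℝ × ℝ) => f p.1 p.2) (y, z) :=
  h.smooth.contDiffAt ((h.isOpen.prod h.isOpen).mem_nhds ⟨hy, hz⟩)

theorem contDiffAt_left (h : IsPlaneLieGroup k D f y₀ inv) {y z : ℝ × ℝ} (hy : y ∈ D) (hz : z ∈ D) :
    ContDiffAt ℝ k (fun x => f y x) z :=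
  ContDiffAt.comp (f := fun x => (y, x)) z (h.contDiffAt_mul hy hz)
    (contDiffAt_const.prodMk contDiffAt_id)

theorem differentiableAt_left (h : IsPlaneLieGroup k D f y₀ inv) {y z : ℝ × ℝ} (hy : y ∈ D)
    (hz : z ∈ D) : DifferentiableAt ℝ (fun x => f y x) z :=
  (h.contDiffAt_left hy hz).differentiableAt (by have := h.two_le; norm_cast; omega)

theorem eventually_mem (h : IsPlaneLieGroup k D f y₀ inv) {y : ℝ × ℝ} (hy : y ∈ D) :
    ∀ᶠ x in 𝓝 y, x ∈ D := h.isOpen.mem_nhds hy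

/-- The chain rule applied to associativity. -/
theorem fderiv_left_mul (h : IsPlaneLieGroup k D f y₀ inv) {y z x : ℝ × ℝ} (hy : y ∈ D)
    (hz : z ∈ D) (hx : x ∈ D) :
    fderiv ℝ (fun x => f (f y z) x) x =
      (fderiv ℝ (fun x => f y x) (f z x)).comp (fderiv ℝ (fun x => f z x) x) := by
  rw [← fderiv_fun_comp x (h.differentiableAt_left hy (h.mul_mem z hz x hx))
    (h.differentiableAt_left hz hx)]
  refine Filter.EventuallyEq.fderiv_eq ?_
  filter_upwards [h.eventually_mem hx] with w hw using h.assoc y hy z hz w hw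

theorem fderiv_left_one (h : IsPlaneLieGroup k D f y₀ inv) {x : ℝ × ℝ} (hx : x ∈ D) :
    fderiv ℝ (fun x => f y₀ x) x = ContinuousLinearMap.id ℝ (ℝ × ℝ) := by
  rw [← fderiv_id (𝕜 := ℝ) (x := x)]
  refine Filter.EventuallyEq.fderiv_eq ?_
  filter_upwards [h.eventually_mem hx] with w hw using h.one_mul w hw

theorem isInvertible (h : IsPlaneLieGroup k D f y₀ inv) {y : ℝ × ℝ} (hy : y ∈ D) :
    (fderiv ℝ (fun x => f y x) y₀).IsInvertible := by
  have hi := h.inv_mem y hy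
  refine .of_inverse (g := fderiv ℝ (fun x => f (inv y) x) y) ?_ ?_
  · have := h.fderiv_left_mul hy hi hy
    rw [h.mul_inv y hy, h.inv_mul y hy, h.fderiv_left_one hy] at this
    exact this.symm
  · have := h.fderiv_left_mul hi hy h.one_mem
    rw [h.mul_one y hy, h.inv_mul y hy, h.fderiv_left_one h.one_mem] at this
    exact this.symm

theorem maurerCartan_apply_fderiv (h : IsPlaneLieGroup k D f y₀ inv) {y : ℝ × ℝ} (hy : y ∈ D)
    (u : ℝ × ℝ) : maurerCartan f y₀ y (fderiv ℝ (fun x => f y x) y₀ u) = u := by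
  have := (h.isInvertible hy).inverse_comp_self
  exact congrArg (fun T : ℝ × ℝ →L[ℝ] ℝ × ℝ => T u) this

theorem fderiv_apply_maurerCartan (h : IsPlaneLieGroup k D f y₀ inv) {y : ℝ × ℝ} (hy : y ∈ D)
    (u : ℝ × ℝ) : fderiv ℝ (fun x => f y x) y₀ (maurerCartan f y₀ y u) = u := by
  have := (h.isInvertible hy).self_comp_inverse
  exact congrArg (fun T : ℝ × ℝ →L[ℝ] ℝ × ℝ => T u) this

/-- Left invariance of the Maurer–Cartan form. -/
theorem maurerCartan_left (h : IsPlaneLieGroup k D f y₀ inv) {y z : ℝ × ℝ} (hy : y ∈ D)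
    (hz : z ∈ D) (u : ℝ × ℝ) :
    maurerCartan f y₀ (f y z) (fderiv ℝ (fun x => f y x) z u) = maurerCartan f y₀ z u := by
  have h1 := h.fderiv_left_mul hy hz h.one_mem
  rw [h.mul_one z hz] at h1
  have h2 := congrArg (fun T : ℝ × ℝ →L[ℝ] ℝ × ℝ => T (maurerCartan f y₀ z u)) h1
  simp only [ContinuousLinearMap.comp_apply] at h2
  rw [h.fderiv_apply_maurerCartan hz] at h2
  rw [← h2, h.maurerCartan_apply_fderiv (h.mul_mem y hy z hz)]

theorem contDiffAt_fderiv (h : IsPlaneLieGroup k D f y₀ inv) {m : ℕ} (hm : m + 1 ≤ k) {y : ℝ × ℝ}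
    (hy : y ∈ D) : ContDiffAt ℝ m (fun y => fderiv ℝ (fun x => f y x) y₀) y := by
  refine ContDiffAt.fderiv (f := f) (g := fun _ => y₀) (n := k) (m := m)
    (h.contDiffAt_mul hy h.one_mem) contDiffAt_const (by exact_mod_cast hm)

theorem contDiffAt_maurerCartan (h : IsPlaneLieGroup k D f y₀ inv) {m : ℕ} (hm : m + 1 ≤ k)
    {y : ℝ × ℝ} (hy : y ∈ D) : ContDiffAt ℝ m (maurerCartan f y₀) y :=
  (h.isInvertible hy).contDiffAt_map_inverse.comp y (h.contDiffAt_fderiv hm hy)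

theorem differentiableAt_maurerCartan (h : IsPlaneLieGroup k D f y₀ inv)
    {y : ℝ × ℝ} (hy : y ∈ D) : DifferentiableAt ℝ (maurerCartan f y₀) y :=
  (h.contDiffAt_maurerCartan (m := 1) h.two_le hy).differentiableAt (by simp)

theorem maurerCartan_one (h : IsPlaneLieGroup k D f y₀ inv) (u : ℝ × ℝ) :
    maurerCartan f y₀ y₀ u = u := by
  have := h.maurerCartan_apply_fderiv h.one_mem u
  rwa [h.fderiv_left_one h.one_mem] at this

/-- Differentiate `θ(y) J₂f(y, y₀) = id` at `y₀`. -/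
theorem fderiv_maurerCartan_one (h : IsPlaneLieGroup k D f y₀ inv) (u v : ℝ × ℝ) :
    fderiv ℝ (maurerCartan f y₀) y₀ u v =
      - fderiv ℝ (fun y => fderiv ℝ (fun x => f y x) y₀) y₀ u v := by
  have hJ : DifferentiableAt ℝ (fun y => fderiv ℝ (fun x => f y x) y₀) y₀ :=
    (h.contDiffAt_fderiv (m := 1) h.two_le h.one_mem).differentiableAt (by simp)
  have hθ := h.differentiableAt_maurerCartan h.one_mem
  have h1 := hθ.hasFDerivAt.clm_apply (hJ.hasFDerivAt.clm_apply (hasFDerivAt_const v y₀))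
  have h2 : HasFDerivAt (fun _ : ℝ × ℝ => v) (0 : ℝ × ℝ →L[ℝ] ℝ × ℝ) y₀ := hasFDerivAt_const v y₀
  have h3 := h2.congr_of_eventuallyEq (f₁ := fun y => maurerCartan f y₀ y
    (fderiv ℝ (fun x => f y x) y₀ v)) (by
      filter_upwards [h.eventually_mem h.one_mem] with w hw using h.maurerCartan_apply_fderiv hw v)
  have h4 := congrArg (fun T : ℝ × ℝ →L[ℝ] ℝ × ℝ => T u) (h1.unique h3)
  simp [h.maurerCartan_one, h.fderiv_left_one h.one_mem] at h4
  exact eq_neg_of_add_eq_zero_right h4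

theorem bracketVec_eq (h : IsPlaneLieGroup k D f y₀ inv) :
    bracketVec f y₀ =
      fderiv ℝ (fun y => fderiv ℝ (fun x => f y x) y₀) y₀ (1, 0) (0, 1)
      - fderiv ℝ (fun y => fderiv ℝ (fun x => f y x) y₀) y₀ (0, 1) (1, 0) := by
  have hJ : DifferentiableAt ℝ (fun y => fderiv ℝ (fun x => f y x) y₀) y₀ :=
    (h.contDiffAt_fderiv (m := 1) h.two_le h.one_mem).differentiableAt (by simp)
  have key : ∀ u w : ℝ × ℝ, fderiv ℝ (fun y => fderiv ℝ (fun x => f y x) y₀ u) y₀ w =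
      fderiv ℝ (fun y => fderiv ℝ (fun x => f y x) y₀) y₀ w u := by
    intro u w
    rw [(hJ.hasFDerivAt.clm_apply (hasFDerivAt_const u y₀)).fderiv]
    simp
  rw [bracketVec, key, key, h.fderiv_left_one h.one_mem]
  rfl

/-- The Maurer–Cartan equation `dθ = -(θ₁ ∧ θ₂) Y₀` at the neutral element, where `θ` is the
identity. -/
theorem structure_eq_one (h : IsPlaneLieGroup k D f y₀ inv) (u v : ℝ × ℝ) :
    fderiv ℝ (maurerCartan f y₀) y₀ u v - fderiv ℝ (maurerCartan f y₀) y₀ v u =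
      -(u.1 * v.2 - u.2 * v.1) • bracketVec f y₀ := by
  rw [h.fderiv_maurerCartan_one, h.fderiv_maurerCartan_one, h.bracketVec_eq]
  set B := fderiv ℝ (fun y => fderiv ℝ (fun x => f y x) y₀) y₀
  have e : ∀ u : ℝ × ℝ, u = u.1 • ((1 : ℝ), (0 : ℝ)) + u.2 • ((0 : ℝ), (1 : ℝ)) := by
    intro u; ext <;> simp
  have hB : ∀ u v : ℝ × ℝ, B u v = (u.1 * v.1) • B (1, 0) (1, 0) + (u.1 * v.2) • B (1, 0) (0, 1)
      + (u.2 * v.1) • B (0, 1) (1, 0) + (u.2 * v.2) • B (0, 1) (0, 1) := by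
    intro u v
    conv_lhs => rw [e u, e v]
    simp only [map_add, map_smul, add_apply, smul_apply]
    module
  rw [hB u v, hB v u]
  module

/-- The Maurer–Cartan equation `dθ = -(θ₁ ∧ θ₂) Y₀` on all of `D`: by left invariance of `θ` it is
the pullback of the equation at the neutral element. -/
theorem structure_eq (h : IsPlaneLieGroup k D f y₀ inv) {y : ℝ × ℝ} (hy : y ∈ D) (a b : ℝ × ℝ) :
    fderiv ℝ (maurerCartan f y₀) y a b - fderiv ℝ (maurerCartan f y₀) y b a =
      -((maurerCartan f y₀ y a).1 * (maurerCartan f y₀ y b).2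
        - (maurerCartan f y₀ y a).2 * (maurerCartan f y₀ y b).1) • bracketVec f y₀ := by
  set u := maurerCartan f y₀ y a with hu
  set v := maurerCartan f y₀ y b with hv
  have hC := h.contDiffAt_left hy h.one_mem
  have hL1 : HasFDerivAt (fun x => f y x) (fderiv ℝ (fun x => f y x) y₀) y₀ :=
    (h.differentiableAt_left hy h.one_mem).hasFDerivAt
  have hL2 : DifferentiableAt ℝ (fderiv ℝ (fun x => f y x)) y₀ :=
    (hC.fderiv_right (m := 1) (by exact_mod_cast h.two_le)).differentiableAt (by simp)
  have hsymm : ∀ p q, fderiv ℝ (fderiv ℝ (fun x => f y x)) y₀ p q =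
      fderiv ℝ (fderiv ℝ (fun x => f y x)) y₀ q p := by
    intro p q
    exact (hC.isSymmSndFDerivAt (by simp; exact_mod_cast h.two_le)) p q
  have hθ : HasFDerivAt (maurerCartan f y₀) (fderiv ℝ (maurerCartan f y₀) y) (f y y₀) := by
    rw [h.mul_one y hy]
    exact (h.differentiableAt_maurerCartan hy).hasFDerivAt
  -- differentiate the left invariance `θ(f y z) ∘ D(f y)(z) = θ(z)` at `z = y₀`
  have key : ∀ p q, fderiv ℝ (maurerCartan f y₀) y (fderiv ℝ (fun x => f y x) y₀ p)
        (fderiv ℝ (fun x => f y x) y₀ q)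
      + maurerCartan f y₀ y (fderiv ℝ (fderiv ℝ (fun x => f y x)) y₀ p q) =
      fderiv ℝ (maurerCartan f y₀) y₀ p q := by
    intro p q
    have h1 := (hθ.comp y₀ hL1).clm_apply (hL2.hasFDerivAt.clm_apply (hasFDerivAt_const q y₀))
    have h2 := (h.differentiableAt_maurerCartan h.one_mem).hasFDerivAt.clm_apply
      (hasFDerivAt_const q y₀)
    have h3 := h2.congr_of_eventuallyEq (f₁ := fun z => maurerCartan f y₀ (f y z)
      (fderiv ℝ (fun x => f y x) z q)) (by
        filter_upwards [h.eventually_mem h.one_mem] with w hw using h.maurerCartan_left hy hw q)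
    have h4 := congrArg (fun T : ℝ × ℝ →L[ℝ] ℝ × ℝ => T p) (h1.unique h3)
    simp [h.mul_one y hy] at h4
    rw [← h4]
    abel
  have ha : fderiv ℝ (fun x => f y x) y₀ u = a := h.fderiv_apply_maurerCartan hy a
  have hb : fderiv ℝ (fun x => f y x) y₀ v = b := h.fderiv_apply_maurerCartan hy b
  rw [← h.structure_eq_one u v, ← key u v, ← key v u, hsymm v u, ha, hb]
  abel

end IsPlaneLieGroup

/-! ### Primitives of invariant forms -/

/-- Two primitives of the same form on a connected open set agree if they agree at a point. -/
theorem eqOn_of_hasFDerivAt {E F : Type*} [NormedAddCommGroup E] [NormedSpace ℝ E]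
    [NormedAddCommGroup F] [NormedSpace ℝ F] {D : Set E} (hD : IsOpen D)
    (hconn : IsConnected D) {g₁ g₂ : E → F} {ω : E → E →L[ℝ] F}
    (h₁ : ∀ y ∈ D, HasFDerivAt g₁ (ω y) y) (h₂ : ∀ y ∈ D, HasFDerivAt g₂ (ω y) y)
    {y₀ : E} (hy₀ : y₀ ∈ D) (h : g₁ y₀ = g₂ y₀) : EqOn g₁ g₂ D :=
  hD.eqOn_of_fderiv_eq hconn.isPreconnected
    (fun y hy => (h₁ y hy).differentiableAt.differentiableWithinAt)
    (fun y hy => (h₂ y hy).differentiableAt.differentiableWithinAt)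
    (fun y hy => by rw [(h₁ y hy).fderiv, (h₂ y hy).fderiv]) hy₀ h

theorem contDiffAt_succ_of_hasFDerivAt {E F : Type*} [NormedAddCommGroup E] [NormedSpace ℝ E]
    [NormedAddCommGroup F] [NormedSpace ℝ F] {D : Set E} (hD : IsOpen D) {g : E → F}
    {ω : E → E →L[ℝ] F} (hg : ∀ y ∈ D, HasFDerivAt g (ω y) y) {m : ℕ} {y : E} (hy : y ∈ D)
    (hω : ContDiffAt ℝ m ω y) : ContDiffAt ℝ (m + 1 : ℕ) g y := by
  push_cast
  exact contDiffAt_succ_iff_hasFDerivAt.2 ⟨ω, ⟨D, hD.mem_nhds hy, hg⟩, hω⟩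

/-- In finite dimension an injective differential is invertible, so the inverse function theorem
applies. -/
theorem exists_equiv_hasStrictFDerivAt {E : Type*} [NormedAddCommGroup E] [NormedSpace ℝ E]
    [FiniteDimensional ℝ E] {g : E → E} {T : E →L[ℝ] E} {y : E} (hg : HasFDerivAt g T y)
    (hC : ContDiffAt ℝ 1 g y) (hT : ∀ a, T a = 0 → a = 0) :
    ∃ T' : E ≃L[ℝ] E, HasStrictFDerivAt g (T' : E →L[ℝ] E) y := by
  refine ⟨(LinearEquiv.ofInjectiveEndo (T : E →ₗ[ℝ] E)
    ((injective_iff_map_eq_zero _).2 hT)).toContinuousLinearEquiv, ?_⟩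
  convert hC.hasStrictFDerivAt' hg (by simp) using 1
  rfl

theorem HasStrictFDerivAt.exists_injOn {E : Type*} [NormedAddCommGroup E] [NormedSpace ℝ E]
    [CompleteSpace E] {g : E → E} {T : E ≃L[ℝ] E} {y : E}
    (hg : HasStrictFDerivAt g (T : E →L[ℝ] E) y) : ∃ U ∈ 𝓝 y, InjOn g U := by
  refine ⟨_, hg.eventually_left_inverse, fun a ha b hb hab => ?_⟩
  rw [← show hg.localInverse g T y (g a) = a from ha,
    ← show hg.localInverse g T y (g b) = b from hb, hab]

namespace IsPlaneLieGroup

variable {k : ℕ} {D : Set (ℝ × ℝ)} {f : ℝ × ℝ → ℝ × ℝ → ℝ × ℝ} {y₀ : ℝ × ℝ}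
  {inv : ℝ × ℝ → ℝ × ℝ}

/-- The group `(D, ⋆)`, carried by the subtype of `D`. -/
@[reducible] def toGroup (h : IsPlaneLieGroup k D f y₀ inv) : Group D where
  mul a b := ⟨f a b, h.mul_mem a a.2 b b.2⟩
  one := ⟨y₀, h.one_mem⟩
  inv a := ⟨inv a, h.inv_mem a a.2⟩
  mul_assoc a b c := Subtype.ext (h.assoc a a.2 b b.2 c c.2)
  one_mul a := Subtype.ext (h.one_mul a a.2)
  mul_one a := Subtype.ext (h.mul_one a a.2)
  inv_mul_cancel a := Subtype.ext (h.inv_mul a a.2)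

theorem isTopologicalGroup (h : IsPlaneLieGroup k D f y₀ inv) :
    letI := h.toGroup; IsTopologicalGroup D := by
  let := h.toGroup
  exact
    { continuous_mul := Continuous.subtype_mk (h.smooth.continuousOn.comp_continuous
        (f := fun p : D × D => ((p.1 : ℝ × ℝ), (p.2 : ℝ × ℝ))) (by fun_prop)
        fun p => ⟨p.1.2, p.2.2⟩) _
      continuous_inv := Continuous.subtype_mk (h.smooth_inv.continuousOn.comp_continuous
        continuous_subtype_val fun p => p.2) _ }

/-- If left translation by `y` scales the form `ω` by `c`, a primitive of `ω` vanishing at `y₀`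
satisfies the corresponding cocycle identity. -/
theorem primitive_mul (h : IsPlaneLieGroup k D f y₀ inv) {F : Type*} [NormedAddCommGroup F]
    [NormedSpace ℝ F] {g : ℝ × ℝ → F} {ω : ℝ × ℝ → ℝ × ℝ →L[ℝ] F}
    (hg : ∀ y ∈ D, HasFDerivAt g (ω y) y) (hg₀ : g y₀ = 0) {y : ℝ × ℝ} (hy : y ∈ D) {c : ℝ}
    (hω : ∀ z ∈ D, ∀ u, ω (f y z) (fderiv ℝ (fun x => f y x) z u) = c • ω z u)
    {z : ℝ × ℝ} (hz : z ∈ D) : g (f y z) = g y + c • g z := by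
  refine eqOn_of_hasFDerivAt h.isOpen h.isConnected (g₁ := fun z => g (f y z))
    (g₂ := fun z => g y + c • g z) (ω := fun z => c • ω z) (fun z hz => ?_)
    (fun z hz => ((hg z hz).const_smul c).const_add _) h.one_mem ?_ hz
  · have h1 := (hg _ (h.mul_mem y hy z hz)).comp z (h.differentiableAt_left hy hz).hasFDerivAt
    rwa [show (ω (f y z)).comp (fderiv ℝ (fun x => f y x) z) = c • ω z from
      ContinuousLinearMap.ext (hω z hz)] at h1
  · simp [h.mul_one y hy, hg₀]

theorem maurerCartan_eq_zero (h : IsPlaneLieGroup k D f y₀ inv) {y : ℝ × ℝ} (hy : y ∈ D)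
    {a : ℝ × ℝ} (ha : maurerCartan f y₀ y a = 0) : a = 0 := by
  rw [← h.fderiv_apply_maurerCartan hy a, ha, map_zero]

theorem exists_nhds_subtype {g : ℝ × ℝ → ℝ × ℝ} {y : D}
    (hg : ∃ U ∈ 𝓝 (y : ℝ × ℝ), InjOn g U) : ∃ U ∈ 𝓝 y, InjOn (fun x : D => g x) U := by
  obtain ⟨U, hU, hinj⟩ := hg
  exact ⟨_, continuous_subtype_val.continuousAt hU, fun a ha b hb hab =>
    Subtype.ext (hinj ha hb hab)⟩

/-- If the Lie algebra of a connected, simply connected plane group is abelian, the Maurer–Cartan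
form has a primitive, which is a locally injective homomorphism to `(ℝ², +)`; hence the group is
commutative. -/
theorem comm_of_bracketVec_eq_zero (h : IsPlaneLieGroup k D f y₀ inv)
    (hsc : SimplyConnectedSpace D) (h0 : bracketVec f y₀ = 0) {a b : ℝ × ℝ} (ha : a ∈ D)
    (hb : b ∈ D) : f a b = f b a := by
  obtain ⟨g, hg₀, hg⟩ := exists_primitive h.isOpen hsc (ω := maurerCartan f y₀)
    (fun y hy => (h.differentiableAt_maurerCartan hy).differentiableWithinAt)
    (fun y hy a b => by
      have := h.structure_eq hy a b
      rwa [h0, smul_zero, sub_eq_zero] at this) h.one_mem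
  let := h.toGroup
  have := h.isTopologicalGroup
  have : ConnectedSpace D := isConnected_iff_connectedSpace.1 h.isConnected
  let φ : D →* Multiplicative (ℝ × ℝ) :=
    { toFun := fun y => Multiplicative.ofAdd (g y)
      map_one' := by
        rw [← ofAdd_zero, ← hg₀]; rfl
      map_mul' := fun y z => by
        have := h.primitive_mul hg hg₀ y.2 (c := 1)
          (fun z hz u => by rw [one_smul, h.maurerCartan_left y.2 hz]) z.2
        rw [one_smul] at this
        exact congrArg Multiplicative.ofAdd this }
  have hinj : ∀ y : D, ∃ U ∈ 𝓝 y, InjOn φ U := by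
    intro y
    obtain ⟨T, hT⟩ := exists_equiv_hasStrictFDerivAt (hg y y.2)
      (by simpa using contDiffAt_succ_of_hasFDerivAt h.isOpen hg y.2 (m := 0)
            (h.contDiffAt_maurerCartan (by have := h.two_le; omega) y.2))
      (fun a ha => h.maurerCartan_eq_zero y.2 ha)
    exact exists_nhds_subtype hT.exists_injOn
  exact congrArg Subtype.val (MonoidHom.commute_of_locallyInjective φ hinj ⟨a, ha⟩ ⟨b, hb⟩)

end IsPlaneLieGroup

/-! ### The affine group -/

/-- The plane with the group law `T`, `(y₁, y₂) T (z₁, z₂) = (y₁ + z₁, y₂ + e^{y₁} z₂)`. -/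
def AffinePlane : Type := ℝ × ℝ

namespace AffinePlane

instance : TopologicalSpace AffinePlane := inferInstanceAs (TopologicalSpace (ℝ × ℝ))
instance : SimplyConnectedSpace AffinePlane := inferInstanceAs (SimplyConnectedSpace (ℝ × ℝ))
instance : LocallyPathConnectedSpace AffinePlane :=
  inferInstanceAs (LocallyPathConnectedSpace (ℝ × ℝ))

noncomputable instance : Group AffinePlane where
  mul y z := ((y.1 + z.1, y.2 + Real.exp y.1 * z.2) : ℝ × ℝ)
  one := ((0, 0) : ℝ × ℝ)
  inv y := ((-y.1, -(Real.exp (-y.1) * y.2)) : ℝ × ℝ)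
  mul_assoc a b c := by
    refine Prod.ext (add_assoc a.1 b.1 c.1) ?_
    show a.2 + Real.exp a.1 * b.2 + Real.exp (a.1 + b.1) * c.2
      = a.2 + Real.exp a.1 * (b.2 + Real.exp b.1 * c.2)
    rw [Real.exp_add]
    ring
  one_mul a := by
    refine Prod.ext (zero_add a.1) ?_
    show 0 + Real.exp 0 * a.2 = a.2
    simp
  mul_one a := by
    refine Prod.ext (add_zero a.1) ?_
    show a.2 + Real.exp a.1 * 0 = a.2
    simp
  inv_mul_cancel a := by
    refine Prod.ext (neg_add_cancel a.1) ?_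
    show -(Real.exp (-a.1) * a.2) + Real.exp (-a.1) * a.2 = 0
    simp

instance : ContinuousMul AffinePlane where
  continuous_mul := show Continuous fun p : (ℝ × ℝ) × (ℝ × ℝ) =>
    ((p.1.1 + p.2.1, p.1.2 + Real.exp p.1.1 * p.2.2) : ℝ × ℝ) by fun_prop

end AffinePlane

/-! ### The affine chart of a non-commutative plane group -/

/-- The left-invariant form `π₁ ∘ M ∘ θ`, where `M` is the matrix built from `Y₀`. -/
noncomputable def affineForm₁ (f : ℝ × ℝ → ℝ × ℝ → ℝ × ℝ) (y₀ y : ℝ × ℝ) : ℝ × ℝ →L[ℝ] ℝ :=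
  ((bracketVec f y₀).2 • ContinuousLinearMap.fst ℝ ℝ ℝ
    - (bracketVec f y₀).1 • ContinuousLinearMap.snd ℝ ℝ ℝ).comp (maurerCartan f y₀ y)

/-- The left-invariant form `π₂ ∘ M ∘ θ`, where `M` is the matrix built from `Y₀`. -/
noncomputable def affineForm₂ (f : ℝ × ℝ → ℝ × ℝ → ℝ × ℝ) (y₀ y : ℝ × ℝ) : ℝ × ℝ →L[ℝ] ℝ :=
  ((bracketVec f y₀).1 • ContinuousLinearMap.fst ℝ ℝ ℝ
    + (bracketVec f y₀).2 • ContinuousLinearMap.snd ℝ ℝ ℝ).comp (maurerCartan f y₀ y)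

theorem affineForm₁_apply (f : ℝ × ℝ → ℝ × ℝ → ℝ × ℝ) (y₀ y a : ℝ × ℝ) :
    affineForm₁ f y₀ y a = (bracketVec f y₀).2 * (maurerCartan f y₀ y a).1
      - (bracketVec f y₀).1 * (maurerCartan f y₀ y a).2 := by
  simp [affineForm₁]

theorem affineForm₂_apply (f : ℝ × ℝ → ℝ × ℝ → ℝ × ℝ) (y₀ y a : ℝ × ℝ) :
    affineForm₂ f y₀ y a = (bracketVec f y₀).1 * (maurerCartan f y₀ y a).1
      + (bracketVec f y₀).2 * (maurerCartan f y₀ y a).2 := by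
  simp [affineForm₂]

/-- `(g₁, g₂)` vanishes at `y₀` and has the differentials `dg₁ = ω₁`, `dg₂ = e^{g₁} ω₂`. -/
structure IsAffineChart (D : Set (ℝ × ℝ)) (f : ℝ × ℝ → ℝ × ℝ → ℝ × ℝ) (y₀ : ℝ × ℝ)
    (g₁ g₂ : ℝ × ℝ → ℝ) : Prop where
  fst_one : g₁ y₀ = 0
  snd_one : g₂ y₀ = 0
  hasFDerivAt_fst : ∀ y ∈ D, HasFDerivAt g₁ (affineForm₁ f y₀ y) y
  hasFDerivAt_snd : ∀ y ∈ D, HasFDerivAt g₂ (Real.exp (g₁ y) • affineForm₂ f y₀ y) y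

namespace IsPlaneLieGroup

variable {k : ℕ} {D : Set (ℝ × ℝ)} {f : ℝ × ℝ → ℝ × ℝ → ℝ × ℝ} {y₀ : ℝ × ℝ}
  {inv : ℝ × ℝ → ℝ × ℝ}

theorem contDiffAt_clm_comp_maurerCartan (h : IsPlaneLieGroup k D f y₀ inv) (L : ℝ × ℝ →L[ℝ] ℝ)
    {m : ℕ} (hm : m + 1 ≤ k) {y : ℝ × ℝ} (hy : y ∈ D) :
    ContDiffAt ℝ m (fun y => L.comp (maurerCartan f y₀ y)) y :=
  contDiffAt_const.clm_comp (h.contDiffAt_maurerCartan hm hy)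

theorem hasFDerivAt_clm_comp_maurerCartan (h : IsPlaneLieGroup k D f y₀ inv)
    (L : ℝ × ℝ →L[ℝ] ℝ) {y : ℝ × ℝ} (hy : y ∈ D) :
    HasFDerivAt (fun y => L.comp (maurerCartan f y₀ y))
      ((ContinuousLinearMap.compL ℝ (ℝ × ℝ) (ℝ × ℝ) ℝ L).comp
        (fderiv ℝ (maurerCartan f y₀) y)) y :=
  (ContinuousLinearMap.compL ℝ (ℝ × ℝ) (ℝ × ℝ) ℝ L).hasFDerivAt.comp y
    (h.differentiableAt_maurerCartan hy).hasFDerivAt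

/-- `ω₁` is closed because `π₁ (M Y₀) = 0`; once a primitive `g₁` is fixed, `e^{g₁} ω₂` is closed
because `dω₂ = -ω₁ ∧ ω₂`, by `π₂ (M Y₀) = det M = |Y₀|²`. -/
theorem exists_isAffineChart (h : IsPlaneLieGroup k D f y₀ inv) (hsc : SimplyConnectedSpace D) :
    ∃ g₁ g₂ : ℝ × ℝ → ℝ, IsAffineChart D f y₀ g₁ g₂ := by
  have h₁ := fun y (hy : y ∈ D) => h.hasFDerivAt_clm_comp_maurerCartan
    ((bracketVec f y₀).2 • ContinuousLinearMap.fst ℝ ℝ ℝ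
      - (bracketVec f y₀).1 • ContinuousLinearMap.snd ℝ ℝ ℝ) hy
  have h₂ := fun y (hy : y ∈ D) => h.hasFDerivAt_clm_comp_maurerCartan
    ((bracketVec f y₀).1 • ContinuousLinearMap.fst ℝ ℝ ℝ
      + (bracketVec f y₀).2 • ContinuousLinearMap.snd ℝ ℝ ℝ) hy
  obtain ⟨g₁, hg₁0, hg₁⟩ := exists_primitive h.isOpen hsc (ω := affineForm₁ f y₀)
    (fun y hy => (h₁ y hy).differentiableAt.differentiableWithinAt)
    (fun y hy a b => by
      have e : fderiv ℝ (affineForm₁ f y₀) y = _ := (h₁ y hy).fderiv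
      have hs := h.structure_eq hy a b
      rw [Prod.ext_iff] at hs
      simp only [Prod.fst_sub, Prod.snd_sub, Prod.smul_fst, Prod.smul_snd, smul_eq_mul] at hs
      rw [e]
      simp
      linear_combination (bracketVec f y₀).2 * hs.1 - (bracketVec f y₀).1 * hs.2) h.one_mem
  have h₃ : ∀ y ∈ D, HasFDerivAt (fun y => Real.exp (g₁ y) • affineForm₂ f y₀ y) _ y :=
    fun y hy => (hg₁ y hy).exp.smul (h₂ y hy)
  obtain ⟨g₂, hg₂0, hg₂⟩ := exists_primitive h.isOpen hsc
    (ω := fun y => Real.exp (g₁ y) • affineForm₂ f y₀ y)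
    (fun y hy => (h₃ y hy).differentiableAt.differentiableWithinAt)
    (fun y hy a b => by
      have hs := h.structure_eq hy a b
      rw [Prod.ext_iff] at hs
      simp only [Prod.fst_sub, Prod.snd_sub, Prod.smul_fst, Prod.smul_snd, smul_eq_mul] at hs
      rw [(h₃ y hy).fderiv]
      simp [affineForm₁_apply]
      linear_combination Real.exp (g₁ y) * ((bracketVec f y₀).1 * hs.1 + (bracketVec f y₀).2 * hs.2))
    h.one_mem
  exact ⟨g₁, g₂, hg₁0, hg₂0, hg₁, hg₂⟩

theorem affineForm₁_left (h : IsPlaneLieGroup k D f y₀ inv) {y z : ℝ × ℝ} (hy : y ∈ D)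
    (hz : z ∈ D) (u : ℝ × ℝ) :
    affineForm₁ f y₀ (f y z) (fderiv ℝ (fun x => f y x) z u) = affineForm₁ f y₀ z u := by
  simp only [affineForm₁_apply, h.maurerCartan_left hy hz]

theorem affineForm₂_left (h : IsPlaneLieGroup k D f y₀ inv) {y z : ℝ × ℝ} (hy : y ∈ D)
    (hz : z ∈ D) (u : ℝ × ℝ) :
    affineForm₂ f y₀ (f y z) (fderiv ℝ (fun x => f y x) z u) = affineForm₂ f y₀ z u := by
  simp only [affineForm₂_apply, h.maurerCartan_left hy hz]

end IsPlaneLieGroup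

namespace IsAffineChart

variable {k : ℕ} {D : Set (ℝ × ℝ)} {f : ℝ × ℝ → ℝ × ℝ → ℝ × ℝ} {y₀ : ℝ × ℝ}
  {inv : ℝ × ℝ → ℝ × ℝ} {g₁ g₂ : ℝ × ℝ → ℝ}

/-- Uniqueness of the chart; the second equation becomes linear once the first components agree. -/
theorem eqOn {h₁ h₂ : ℝ × ℝ → ℝ} (hc : IsAffineChart D f y₀ g₁ g₂)
    (h : IsPlaneLieGroup k D f y₀ inv) (hh : IsAffineChart D f y₀ h₁ h₂) :
    EqOn h₁ g₁ D ∧ EqOn h₂ g₂ D := by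
  have e₁ : EqOn h₁ g₁ D := eqOn_of_hasFDerivAt h.isOpen h.isConnected hh.hasFDerivAt_fst
    hc.hasFDerivAt_fst h.one_mem (hh.fst_one.trans hc.fst_one.symm)
  refine ⟨e₁, eqOn_of_hasFDerivAt h.isOpen h.isConnected hh.hasFDerivAt_snd (fun y hy => ?_)
    h.one_mem (hh.snd_one.trans hc.snd_one.symm)⟩
  rw [e₁ hy]
  exact hc.hasFDerivAt_snd y hy

theorem fst_mul (hc : IsAffineChart D f y₀ g₁ g₂) (h : IsPlaneLieGroup k D f y₀ inv) {y z : ℝ × ℝ}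
    (hy : y ∈ D) (hz : z ∈ D) : g₁ (f y z) = g₁ y + g₁ z := by
  simpa using h.primitive_mul hc.hasFDerivAt_fst hc.fst_one hy (c := 1)
    (fun z hz u => by rw [one_smul, h.affineForm₁_left hy hz]) hz

theorem snd_mul (hc : IsAffineChart D f y₀ g₁ g₂) (h : IsPlaneLieGroup k D f y₀ inv) {y z : ℝ × ℝ}
    (hy : y ∈ D) (hz : z ∈ D) : g₂ (f y z) = g₂ y + Real.exp (g₁ y) * g₂ z :=
  h.primitive_mul hc.hasFDerivAt_snd hc.snd_one hy (c := Real.exp (g₁ y))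
    (fun z hz u => by
      simp only [smul_apply, h.affineForm₂_left hy hz, hc.fst_mul h hy hz, Real.exp_add,
        smul_eq_mul, mul_assoc]) hz

theorem contDiffAt (hc : IsAffineChart D f y₀ g₁ g₂) (h : IsPlaneLieGroup k D f y₀ inv)
    {y : ℝ × ℝ} (hy : y ∈ D) : ContDiffAt ℝ k (fun y => (g₁ y, g₂ y)) y := by
  obtain ⟨m, rfl⟩ : ∃ m, k = m + 1 := ⟨k - 1, by have := h.two_le; omega⟩
  have h₁ : ContDiffAt ℝ (m + 1 : ℕ) g₁ y := contDiffAt_succ_of_hasFDerivAt h.isOpen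
    hc.hasFDerivAt_fst hy (h.contDiffAt_clm_comp_maurerCartan _ le_rfl hy)
  refine h₁.prodMk (contDiffAt_succ_of_hasFDerivAt h.isOpen hc.hasFDerivAt_snd hy ?_)
  exact (h₁.of_le (by norm_cast; omega)).exp.smul
    (h.contDiffAt_clm_comp_maurerCartan _ le_rfl hy)

/-- The differential of `(g₁, g₂)` is `(ω₁, e^{g₁} ω₂)`, invertible because `det M = |Y₀|² ≠ 0`. -/
theorem exists_hasStrictFDerivAt (hc : IsAffineChart D f y₀ g₁ g₂)
    (h : IsPlaneLieGroup k D f y₀ inv) (h0 : bracketVec f y₀ ≠ 0) {y : ℝ × ℝ} (hy : y ∈ D) :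
    ∃ T : (ℝ × ℝ) ≃L[ℝ] ℝ × ℝ,
      HasStrictFDerivAt (fun y => (g₁ y, g₂ y)) (T : ℝ × ℝ →L[ℝ] ℝ × ℝ) y := by
  refine exists_equiv_hasStrictFDerivAt
    ((hc.hasFDerivAt_fst y hy).prodMk (hc.hasFDerivAt_snd y hy))
    ((hc.contDiffAt h hy).of_le (by have := h.two_le; norm_cast; omega)) fun a ha => ?_
  have h1 : affineForm₁ f y₀ y a = 0 := congrArg Prod.fst ha
  have h2 : Real.exp (g₁ y) * affineForm₂ f y₀ y a = 0 := congrArg Prod.snd ha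
  replace h2 := (mul_eq_zero.1 h2).resolve_left (Real.exp_ne_zero _)
  rw [affineForm₁_apply] at h1
  rw [affineForm₂_apply] at h2
  have hpos : (bracketVec f y₀).1 ^ 2 + (bracketVec f y₀).2 ^ 2 ≠ 0 := fun hz => h0 <| by
    refine Prod.ext ?_ ?_
    · show (bracketVec f y₀).1 = 0
      nlinarith [sq_nonneg (bracketVec f y₀).1, sq_nonneg (bracketVec f y₀).2]
    · show (bracketVec f y₀).2 = 0
      nlinarith [sq_nonneg (bracketVec f y₀).1, sq_nonneg (bracketVec f y₀).2]
  refine h.maurerCartan_eq_zero hy (Prod.ext ?_ ?_)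
  · refine (mul_eq_zero.1 ?_).resolve_left hpos
    linear_combination (bracketVec f y₀).2 * h1 + (bracketVec f y₀).1 * h2
  · refine (mul_eq_zero.1 ?_).resolve_left hpos
    linear_combination -(bracketVec f y₀).1 * h1 + (bracketVec f y₀).2 * h2

/-- The chart is a homomorphism and a local homeomorphism from a connected group to the simply
connected group `(ℝ², T)`, hence a bijection. -/
theorem bijOn (hc : IsAffineChart D f y₀ g₁ g₂) (h : IsPlaneLieGroup k D f y₀ inv)
    (h0 : bracketVec f y₀ ≠ 0) : BijOn (fun y => (g₁ y, g₂ y)) D univ := by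
  let := h.toGroup
  have := h.isTopologicalGroup
  have : ConnectedSpace D := isConnected_iff_connectedSpace.1 h.isConnected
  let φ : D →* AffinePlane :=
    { toFun := fun y => ((g₁ y, g₂ y) : ℝ × ℝ)
      map_one' := Prod.ext hc.fst_one hc.snd_one
      map_mul' := fun y z => Prod.ext (hc.fst_mul h y.2 z.2) (hc.snd_mul h y.2 z.2) }
  have hcont : Continuous φ := by
    refine continuous_iff_continuousAt.2 fun y => ?_
    exact ContinuousAt.comp (g := fun y => (g₁ y, g₂ y)) (hc.contDiffAt h y.2).continuousAt
      continuous_subtype_val.continuousAt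
  have hopen : IsOpenMap φ := by
    refine IsOpenMap.of_nhds_le fun y => ?_
    obtain ⟨T, hT⟩ := hc.exists_hasStrictFDerivAt h h0 y.2
    have h1 := hT.map_nhds_eq_of_equiv
    rw [← h.isOpen.isOpenEmbedding_subtypeVal.map_nhds_eq y, Filter.map_map] at h1
    exact h1.ge
  have hbij := MonoidHom.bijective_of_simplyConnected φ hcont hopen fun y => by
    obtain ⟨T, hT⟩ := hc.exists_hasStrictFDerivAt h h0 y.2
    exact IsPlaneLieGroup.exists_nhds_subtype hT.exists_injOn
  refine ⟨mapsTo_univ _ _, fun a ha b hb hab => ?_, fun x _ => ?_⟩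
  · exact congrArg Subtype.val (@hbij.1 ⟨a, ha⟩ ⟨b, hb⟩ hab)
  · obtain ⟨y, hy⟩ := hbij.2 x
    exact ⟨y, y.2, hy⟩

end IsAffineChart

/-- A `C^n` bijection onto the whole space with invertible differentials has a globally defined `C^n`
inverse. -/
theorem exists_contDiff_inverse {E : Type*} [NormedAddCommGroup E] [NormedSpace ℝ E]
    [CompleteSpace E] {D : Set E} (hD : IsOpen D) {g : E → E} {n : ℕ} (hn : 1 ≤ n)
    (hg : ∀ y ∈ D, ContDiffAt ℝ n g y) (hbij : BijOn g D univ)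
    (hT : ∀ y ∈ D, ∃ T : E ≃L[ℝ] E, HasStrictFDerivAt g (T : E →L[ℝ] E) y) :
    ∃ ginv : E → E, ContDiff ℝ n ginv ∧ (∀ x, ginv x ∈ D) ∧ (∀ y ∈ D, ginv (g y) = y) ∧
      ∀ x, g (ginv x) = x := by
  choose ginv hmem hright using fun x => hbij.surjOn (mem_univ x)
  have hleft : ∀ y ∈ D, ginv (g y) = y := fun y hy => hbij.injOn (hmem _) hy (hright _)
  refine ⟨ginv, contDiff_iff_contDiffAt.2 fun x => ?_, hmem, hleft, hright⟩
  obtain ⟨T, hTy⟩ := hT _ (hmem x)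
  have hn' : (n : WithTop ℕ∞) ≠ 0 := by norm_cast; omega
  have hloc := (hg _ (hmem x)).to_localInverse hTy.hasFDerivAt hn'
  rw [hright] at hloc
  refine hloc.congr_of_eventuallyEq ?_
  have hS := (hg _ (hmem x)).hasStrictFDerivAt' hTy.hasFDerivAt hn'
  have h1 := hS.eventually_right_inverse
  have h2 := hS.localInverse_continuousAt.eventually (p := fun y => y ∈ D) (by
    rw [hS.localInverse_apply_image]; exact hD.mem_nhds (hmem x))
  rw [hright] at h1 h2
  filter_upwards [h1, h2] with w hw1 hw2
  exact (congrArg ginv hw1).symm.trans (hleft _ hw2)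

end

/-- for a non-commutative `C^k` Lie group structure `(D, ⋆)` (with `k ≥ 2`) on an
open, connected, simply connected set `D ⊆ ℝ²`, one has `Y₀ ≠ 0`, and with
`M = ((π₂Y₀, −π₁Y₀), (π₁Y₀, π₂Y₀))` there is a unique pair `g₁, g₂ : D → ℝ` vanishing at `y₀`
with `dg₁(y) = a ↦ π₁(M (J₂f(y,y₀))⁻¹ a)` and `dg₂(y) = a ↦ e^{g₁(y)} π₂(M (J₂f(y,y₀))⁻¹ a)`;
moreover `g = (g₁, g₂)` is a `C^k`-diffeomorphism from `D` onto `ℝ²` and a group isomorphism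
onto `(ℝ², T)`. -/
theorem stmt_3
    (k : ℕ) (hk : 2 ≤ k)
    (D : Set (ℝ × ℝ)) (hDopen : IsOpen D) (hDconn : IsConnected D)
    (hDsc : SimplyConnectedSpace D)
    (f : ℝ × ℝ → ℝ × ℝ → ℝ × ℝ) (y₀ : ℝ × ℝ) (hy₀ : y₀ ∈ D)
    (hmul : ∀ a ∈ D, ∀ b ∈ D, f a b ∈ D)
    (hassoc : ∀ a ∈ D, ∀ b ∈ D, ∀ c ∈ D, f (f a b) c = f a (f b c))
    (hone_mul : ∀ a ∈ D, f y₀ a = a)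
    (hmul_one : ∀ a ∈ D, f a y₀ = a)
    (inv : ℝ × ℝ → ℝ × ℝ)
    (hinv_mem : ∀ a ∈ D, inv a ∈ D)
    (hmul_inv : ∀ a ∈ D, f a (inv a) = y₀)
    (hinv_mul : ∀ a ∈ D, f (inv a) a = y₀)
    (hf_smooth : ContDiffOn ℝ k (fun p : (ℝ × ℝ) × (ℝ × ℝ) => f p.1 p.2) (D ×ˢ D))
    (hinv_smooth : ContDiffOn ℝ k inv D)
    (hnoncomm : ¬ (∀ a ∈ D, ∀ b ∈ D, f a b = f b a)) :
    let V : ℝ × ℝ → ℝ × ℝ → ℝ × ℝ := fun u y => fderiv ℝ (fun x => f y x) y₀ u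
    let Y₀ : ℝ × ℝ :=
      fderiv ℝ (V ((0 : ℝ), (1 : ℝ))) y₀ (V ((1 : ℝ), (0 : ℝ)) y₀)
        - fderiv ℝ (V ((1 : ℝ), (0 : ℝ))) y₀ (V ((0 : ℝ), (1 : ℝ)) y₀)
    let M : ℝ × ℝ → ℝ × ℝ := fun a => (Y₀.2 * a.1 - Y₀.1 * a.2, Y₀.1 * a.1 + Y₀.2 * a.2)
    Y₀ ≠ 0 ∧
    ∃ g₁ g₂ : ℝ × ℝ → ℝ,
      g₁ y₀ = 0 ∧ g₂ y₀ = 0 ∧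
      (∀ y ∈ D, DifferentiableAt ℝ g₁ y ∧
        ∀ a : ℝ × ℝ, fderiv ℝ g₁ y a = (M ((fderiv ℝ (fun x => f y x) y₀).inverse a)).1) ∧
      (∀ y ∈ D, DifferentiableAt ℝ g₂ y ∧
        ∀ a : ℝ × ℝ, fderiv ℝ g₂ y a =
          Real.exp (g₁ y) * (M ((fderiv ℝ (fun x => f y x) y₀).inverse a)).2) ∧
      (∀ h₁ h₂ : ℝ × ℝ → ℝ, h₁ y₀ = 0 → h₂ y₀ = 0 →
        (∀ y ∈ D, DifferentiableAt ℝ h₁ y ∧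
          ∀ a : ℝ × ℝ, fderiv ℝ h₁ y a = (M ((fderiv ℝ (fun x => f y x) y₀).inverse a)).1) →
        (∀ y ∈ D, DifferentiableAt ℝ h₂ y ∧
          ∀ a : ℝ × ℝ, fderiv ℝ h₂ y a =
            Real.exp (h₁ y) * (M ((fderiv ℝ (fun x => f y x) y₀).inverse a)).2) →
        Set.EqOn h₁ g₁ D ∧ Set.EqOn h₂ g₂ D) ∧
      ContDiffOn ℝ k (fun y => ((g₁ y, g₂ y) : ℝ × ℝ)) D ∧
      Set.BijOn (fun y => ((g₁ y, g₂ y) : ℝ × ℝ)) D Set.univ ∧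
      (∃ ginv : ℝ × ℝ → ℝ × ℝ, ContDiff ℝ k ginv ∧ (∀ x : ℝ × ℝ, ginv x ∈ D) ∧
        (∀ y ∈ D, ginv (g₁ y, g₂ y) = y) ∧
        (∀ x : ℝ × ℝ, ((g₁ (ginv x), g₂ (ginv x)) : ℝ × ℝ) = x)) ∧
      (∀ y ∈ D, ∀ z ∈ D,
        g₁ (f y z) = g₁ y + g₁ z ∧ g₂ (f y z) = g₂ y + Real.exp (g₁ y) * g₂ z) := by
  intro V Y₀ M
  have h : IsPlaneLieGroup k D f y₀ inv := ⟨hk, hDopen, hDconn, hy₀, hmul, hassoc, hone_mul,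
    hmul_one, hinv_mem, hmul_inv, hinv_mul, hf_smooth, hinv_smooth⟩
  have hY : bracketVec f y₀ ≠ 0 := fun h0 =>
    hnoncomm fun a ha b hb => h.comm_of_bracketVec_eq_zero hDsc h0 ha hb
  have hM₁ : ∀ y a, affineForm₁ f y₀ y a = (M (maurerCartan f y₀ y a)).1 :=
    affineForm₁_apply f y₀
  have hM₂ : ∀ y a, affineForm₂ f y₀ y a = (M (maurerCartan f y₀ y a)).2 :=
    affineForm₂_apply f y₀
  obtain ⟨g₁, g₂, hg⟩ := h.exists_isAffineChart hDsc
  have hbij := hg.bijOn h hY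
  refine ⟨hY, g₁, g₂, hg.fst_one, hg.snd_one, fun y hy => ?_, fun y hy => ?_,
    fun h₁ h₂ h₁0 h₂0 hd₁ hd₂ => hg.eqOn h ⟨h₁0, h₂0, fun y hy => ?_, fun y hy => ?_⟩,
    fun y hy => (hg.contDiffAt h hy).contDiffWithinAt, hbij,
    exists_contDiff_inverse hDopen (by omega) (fun y hy => hg.contDiffAt h hy) hbij
      (fun y hy => hg.exists_hasStrictFDerivAt h hY hy),
    fun y hy z hz => ⟨hg.fst_mul h hy hz, hg.snd_mul h hy hz⟩⟩
  · refine ⟨(hg.hasFDerivAt_fst y hy).differentiableAt, fun a => ?_⟩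
    rw [(hg.hasFDerivAt_fst y hy).fderiv]
    exact hM₁ y a
  · refine ⟨(hg.hasFDerivAt_snd y hy).differentiableAt, fun a => ?_⟩
    rw [(hg.hasFDerivAt_snd y hy).fderiv, smul_apply, hM₂]
    rfl
  · convert (hd₁ y hy).1.hasFDerivAt using 1
    refine ContinuousLinearMap.ext fun a => ?_
    rw [hM₁, (hd₁ y hy).2]
    rfl
  · convert (hd₂ y hy).1.hasFDerivAt using 1
    refine ContinuousLinearMap.ext fun a => ?_
    rw [smul_apply, hM₂, (hd₂ y hy).2]
    rfl
end

section
/- If h : I → I is a strictly increasing homeomorphism of I such that for every t ≥ 0 the pushforward of μ_t under h equals μ_t, then h is the identity map of I. -/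
/-! For `x ∈ I`, strict monotonicity gives `h ⁻¹' (Iic (h x)) ∩ I = Iic x ∩ I`, so invariance says
that the distribution function of every `μ t` takes the same value at `x` and at `h x`. If
`h x ≠ x`, the nondegenerate interval between `x` and `h x`, which lies in `I`, is then null for
every `μ t`, contradicting the full-support condition at its midpoint. -/

open MeasureTheory

/-- if `(μ_t)_{t ≥ 0}` is a family of probability measures on an open interval
`I` with the full-support property, and `h` is a strictly increasing homeomorphism of `I`
leaving every `μ_t` invariant, then `h` is the identity on `I`. -/
theorem stmt_12
    (I : Set ℝ) (hIopen : IsOpen I) (hIne : I.Nonempty) (hIconn : I.OrdConnected)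
    (μ : ℝ → Measure ℝ)
    (hprob : ∀ t : ℝ, 0 ≤ t → IsProbabilityMeasure (μ t))
    (hsupp : ∀ t : ℝ, 0 ≤ t → μ t Iᶜ = 0)
    (hfull : ∀ z ∈ I, ∀ ε > (0 : ℝ), ∃ t : ℝ, 0 ≤ t ∧
      0 < μ t (Set.Ioo (z - ε) (z + ε) ∩ I))
    (h : ℝ → ℝ)
    (hbij : Set.BijOn h I I) (hmono : StrictMonoOn h I) (hcont : ContinuousOn h I)
    (hinvariant : ∀ t : ℝ, 0 ≤ t → Measure.map h (μ t) = μ t) :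
    Set.EqOn h id I := by
  -- The distribution function of every `μ t` is invariant under `h`.
  have key : ∀ t : ℝ, 0 ≤ t → ∀ x ∈ I, μ t (Set.Iic (h x)) = μ t (Set.Iic x) := by
    intro t ht x hx
    have := hprob t ht
    -- `Measure.map` is zero for a map that is not a.e. measurable, and `μ t` is not zero.
    have hmeas : AEMeasurable h (μ t) := by
      apply AEMeasurable.of_map_ne_zero
      rw [hinvariant t ht]
      exact IsProbabilityMeasure.ne_zero _
    have hI : ∀ᵐ y ∂(μ t), y ∈ I := hsupp t ht
    calc μ t (Set.Iic (h x)) = Measure.map h (μ t) (Set.Iic (h x)) := by rw [hinvariant t ht]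
      _ = μ t (h ⁻¹' Set.Iic (h x)) := Measure.map_apply_of_aemeasurable hmeas measurableSet_Iic
      _ = μ t (Set.Iic x) := by
        apply measure_congr
        filter_upwards [hI] with y hy
        exact propext (hmono.le_iff_le hy hx)
  have no_gap : ∀ a ∈ I, ∀ b ∈ I, a < b →
      ¬ ∀ t : ℝ, 0 ≤ t → μ t (Set.Iic a) = μ t (Set.Iic b) := by
    intro a ha b hb hab heq
    have hz : (a + b) / 2 ∈ I := hIconn.out ha hb ⟨by linarith, by linarith⟩
    obtain ⟨t, ht, hpos⟩ := hfull _ hz ((b - a) / 2) (by linarith)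
    have := hprob t ht
    have hnull : μ t (Set.Iic b \ Set.Iic a) = 0 := by
      rw [measure_sdiff (Set.Iic_subset_Iic.2 hab.le) measurableSet_Iic.nullMeasurableSet
        (measure_ne_top _ _), heq t ht, tsub_self]
    refine hpos.ne' (measure_mono_null ?_ hnull)
    rintro y ⟨⟨h1, h2⟩, -⟩
    simp only [Set.mem_sdiff, Set.mem_Iic, not_le]
    constructor <;> linarith
  intro x hx
  have hhx : h x ∈ I := hbij.mapsTo hx
  rcases lt_trichotomy (h x) x with hlt | heq | hgt
  · exact (no_gap _ hhx _ hx hlt fun t ht => key t ht x hx).elim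
  · exact heq
  · exact (no_gap _ hx _ hhx hgt fun t ht => (key t ht x hx).symm).elim
end
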